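/- arXiv:2309.15398 — 2 statements merged into one kernel-verified Lean document; each statement's English description precedes it below -/
import Mathlib

section
/- Suppose K ≠ ∅, the highest-degree homogeneous part f^hm of f is a positive definite form (f^hm(x) > 0 for all x ≠ 0 in ℝⁿ), and f_min = inf_{x∈K} f(x) (which is finite). If the LICQC, SCC and SOSC hold at every global minimizer of the problem (H): minimize f̃(x̃) − f_min·x_0^d subject to c̃_j(x̃) = 0 (j∈E), ‖x̃‖² − 1 = 0, c̃_j(x̃) ≥ 0 (j∈I), x_0 ≥ 0, then there exists k0 ∈ ℕ such that f_k^den = f_min for all k ≥ k0. -/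
open MvPolynomial MeasureTheory

noncomputable section

/-- The space of real polynomials in `n` variables. -/
abbrev RPoly (n : ℕ) : Type := MvPolynomial (Fin n) ℝ

/-- The degree `|α|` of a monomial power `α`. -/
def mdeg {n : ℕ} (α : Fin n →₀ ℕ) : ℕ := ∑ i, α i

/-- `p` is a sum of squares of polynomials. -/
def IsSOS {n : ℕ} (p : RPoly n) : Prop :=
  ∃ L : List (RPoly n), p = (L.map (fun q => q ^ 2)).sum

/-- The truncation `QM(g)_k` of the quadratic module generated by `(g j)_{j ∈ S}`. -/
def QModDeg {n : ℕ} {κ : Type} (S : Finset κ) (g : κ → RPoly n) (k : ℕ) :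
    Set (RPoly n) :=
  {p | ∃ σ0 : RPoly n, ∃ σ : κ → RPoly n,
      IsSOS σ0 ∧ σ0.totalDegree ≤ k ∧
      (∀ j ∈ S, IsSOS (σ j) ∧ (σ j).totalDegree + (g j).totalDegree ≤ k) ∧
      p = σ0 + ∑ j ∈ S, g j * σ j}

/-- The truncation `Ideal(h)_k` of the ideal generated by `(h j)_{j ∈ S}`. -/
def IdealDeg {n : ℕ} {ι : Type} (S : Finset ι) (h : ι → RPoly n) (k : ℕ) :
    Set (RPoly n) :=
  {p | ∃ q : ι → RPoly n,
      (∀ j ∈ S, (q j).totalDegree + (h j).totalDegree ≤ k) ∧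
      p = ∑ j ∈ S, h j * q j}

/-- The quadratic module `QM(g)` generated by `(g j)_{j ∈ S}`. -/
def QModFull {n : ℕ} {κ : Type} (S : Finset κ) (g : κ → RPoly n) : Set (RPoly n) :=
  {p | ∃ σ0 : RPoly n, ∃ σ : κ → RPoly n,
      IsSOS σ0 ∧ (∀ j ∈ S, IsSOS (σ j)) ∧ p = σ0 + ∑ j ∈ S, g j * σ j}

/-- The ideal `Ideal(h)` generated by `(h j)_{j ∈ S}`. -/
def IdealFull {n : ℕ} {ι : Type} (S : Finset ι) (h : ι → RPoly n) : Set (RPoly n) :=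
  (Ideal.span (h '' (S : Set ι)) : Ideal (RPoly n))

/-- `Ideal(c_eq) + QM(c_in)` is archimedean. -/
def ArchimedeanQM {n : ℕ} (E I : Finset ℕ) (c : ℕ → RPoly n) : Prop :=
  ∃ R : ℝ, 0 < R ∧ ∃ p1 ∈ IdealFull E c, ∃ p2 ∈ QModFull I c,
    (C R : RPoly n) - ∑ i, (X i : RPoly n) ^ 2 = p1 + p2

/-- The basic closed semialgebraic set `K`. -/
def Kset {n : ℕ} (E I : Finset ℕ) (c : ℕ → RPoly n) : Set (Fin n → ℝ) :=
  {x | (∀ j ∈ E, eval x (c j) = 0) ∧ (∀ j ∈ I, 0 ≤ eval x (c j))}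

/-- The bilinear pairing `⟨p, y⟩ = ∑_α p_α y_α`. -/
def pairing {n : ℕ} (p : RPoly n) (y : (Fin n →₀ ℕ) → ℝ) : ℝ :=
  ∑ α ∈ p.support, p.coeff α * y α

/-- Membership in the moment cone `ℛ_d(K)`: the entries `y_α`, `|α| ≤ d`, are the
moments of a finite Borel measure supported in the closed set `K`. -/
def InMomentCone {n : ℕ} (d : ℕ) (K : Set (Fin n → ℝ)) (y : (Fin n →₀ ℕ) → ℝ) : Prop :=
  ∃ μ : Measure (Fin n → ℝ), IsFiniteMeasure μ ∧ μ Kᶜ = 0 ∧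
    ∀ α : Fin n →₀ ℕ, mdeg α ≤ d →
      Integrable (fun x => ∏ i, x i ^ α i) μ ∧
      y α = ∫ x, (∏ i, x i ^ α i) ∂μ

/-- The cone `P_d(K)` of polynomials of degree at most `d` that are nonnegative on `K`. -/
def PdCone {n : ℕ} (d : ℕ) (K : Set (Fin n → ℝ)) : Set (RPoly n) :=
  {p | p.totalDegree ≤ d ∧ ∀ x ∈ K, 0 ≤ eval x p}

/-- The interior of `P_d(K)` in the coefficient topology of `ℝ[x]_d`. -/
def PdInterior {n : ℕ} (d : ℕ) (K : Set (Fin n → ℝ)) : Set (RPoly n) :=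
  {p | p.totalDegree ≤ d ∧ ∃ ε : ℝ, 0 < ε ∧ ∀ q : RPoly n, q.totalDegree ≤ d →
      (∀ α : Fin n →₀ ℕ, |q.coeff α - p.coeff α| ≤ ε) → ∀ x ∈ K, 0 ≤ eval x q}

instance degLEFintype (n t : ℕ) : Fintype {α : Fin n →₀ ℕ // mdeg α ≤ t} := by
  apply Fintype.ofInjective
    (fun a : {α : Fin n →₀ ℕ // mdeg α ≤ t} =>
      (fun i => (⟨a.1 i, by
        have h1 : a.1 i ≤ mdeg a.1 :=
          Finset.single_le_sum (fun j _ => Nat.zero_le _) (Finset.mem_univ i)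
        exact Nat.lt_succ_of_le (le_trans h1 a.2)⟩ : Fin (t + 1))) :
        {α : Fin n →₀ ℕ // mdeg α ≤ t} → (Fin n → Fin (t + 1)))
  intro a b hab
  apply Subtype.ext
  ext i
  exact congrArg Fin.val (congrFun hab i)

/-- The moment matrix `M_t[w]`, indexed by monomial powers of degree at most `t`. -/
def momentMatrix {n : ℕ} (t : ℕ) (w : (Fin n →₀ ℕ) → ℝ) :
    Matrix {α : Fin n →₀ ℕ // mdeg α ≤ t} {α : Fin n →₀ ℕ // mdeg α ≤ t} ℝ :=
  fun α β => w (α.1 + β.1)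

/-- `w` admits a flat truncation: for some `d0 ≤ t ≤ k`,
`rank M_{t-dK}[w] = rank M_t[w]`. -/
def HasFlatTruncation {n : ℕ} (d0 dK k : ℕ) (w : (Fin n →₀ ℕ) → ℝ) : Prop :=
  ∃ t : ℕ, d0 ≤ t ∧ t ≤ k ∧
    (momentMatrix (t - dK) w).rank = (momentMatrix t w).rank

/-- The gradient of a polynomial at a point. -/
def gradP {n : ℕ} (p : RPoly n) (u : Fin n → ℝ) : Fin n → ℝ :=
  fun i => eval u (pderiv i p)

/-- The Hessian of a polynomial at a point. -/
def hessP {n : ℕ} (p : RPoly n) (u : Fin n → ℝ) : Fin n → Fin n → ℝ :=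
  fun i j => eval u (pderiv i (pderiv j p))

/-- The classical optimality conditions (LICQC, KKT with SCC and SOSC) at the point `u`
for the problem: minimize `F` subject to `ge j = 0` (`j ∈ Es`), `gi j ≥ 0` (`j ∈ Is`). -/
def OptCondsAt {n : ℕ} {ι κ : Type}
    (Es : Finset ι) (ge : ι → RPoly n) (Is : Finset κ) (gi : κ → RPoly n)
    (F : RPoly n) (u : Fin n → ℝ) : Prop :=
  -- LICQC: gradients of active constraints are linearly independent
  LinearIndependent ℝ
    (Sum.elim
      (fun j : {j : ι // j ∈ Es ∧ eval u (ge j) = 0} => gradP (ge j.1) u)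
      (fun j : {j : κ // j ∈ Is ∧ eval u (gi j) = 0} => gradP (gi j.1) u)) ∧
  ∃ (lamE : ι → ℝ) (lamI : κ → ℝ),
    -- KKT stationarity
    (gradP F u =
      (∑ j ∈ Es, lamE j • gradP (ge j) u) + ∑ j ∈ Is, lamI j • gradP (gi j) u) ∧
    (∀ j ∈ Is, 0 ≤ lamI j ∧ lamI j * eval u (gi j) = 0) ∧
    -- SCC
    (∀ j ∈ Is, 0 < lamI j + eval u (gi j)) ∧
    -- SOSC
    (∀ v : Fin n → ℝ, v ≠ 0 →
      (∀ j ∈ Es, (∑ i, v i * gradP (ge j) u i) = 0) →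
      (∀ j ∈ Is, eval u (gi j) = 0 → (∑ i, v i * gradP (gi j) u i) = 0) →
      0 < ∑ i, ∑ i', v i *
        ((hessP F u i i' - ∑ j ∈ Es, lamE j * hessP (ge j) u i i')
          - ∑ j ∈ Is, lamI j * hessP (gi j) u i i') * v i')

/-- The degree-`ℓ` homogenization `x_0^ℓ p(x/x_0)` of `p`; the new variable `x_0`
is the variable of index `0` in `Fin (n+1)`. -/
def homogAux {n : ℕ} (ℓ : ℕ) (p : RPoly n) : RPoly (n + 1) :=
  ∑ α ∈ p.support,
    monomial
      (Finsupp.single (0 : Fin (n + 1)) (ℓ - mdeg α) + Finsupp.mapDomain Fin.succ α)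
      (p.coeff α)

/-- The homogenization `p̃` of `p`. -/
def homogenize {n : ℕ} (p : RPoly n) : RPoly (n + 1) := homogAux p.totalDegree p

/-- The polynomial `‖x̃‖² - 1`. -/
def sphereP (n : ℕ) : RPoly (n + 1) := (∑ i, (X i : RPoly (n + 1)) ^ 2) - 1

/-- The homogenization `K̃` of the set `K`. -/
def Khom {n : ℕ} (E I : Finset ℕ) (c : ℕ → RPoly n) : Set (Fin (n + 1) → ℝ) :=
  {x | (∀ j ∈ E, eval x (homogenize (c j)) = 0) ∧
       (∀ j ∈ I, 0 ≤ eval x (homogenize (c j))) ∧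
       (∑ i, (x i) ^ 2) = 1 ∧ 0 ≤ x 0}

/-- `K` is closed at infinity. -/
def ClosedAtInfinity {n : ℕ} (E I : Finset ℕ) (c : ℕ → RPoly n) : Prop :=
  Khom E I c = closure (Khom E I c ∩ {x | 0 < x 0})

/-- The tuple `c̃_eq`: the homogenizations `c̃_j` together with `‖x̃‖² - 1`
(the latter indexed by `none`). -/
def gEqH {n : ℕ} (c : ℕ → RPoly n) : Option ℕ → RPoly (n + 1) :=
  fun o => o.elim (sphereP n) (fun j => homogenize (c j))

/-- The tuple `c̃_in`: the homogenizations `c̃_j` together with `x_0`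
(the latter indexed by `none`). -/
def gInH {n : ℕ} (c : ℕ → RPoly n) : Option ℕ → RPoly (n + 1) :=
  fun o => o.elim (X 0) (fun j => homogenize (c j))

/-- The index set of a tuple extended by one extra entry (indexed by `none`). -/
def OS (S : Finset ℕ) : Finset (Option ℕ) := insert none (S.image some)

/-- Feasibility of `θ` for the linear conic problem (P). -/
def PFeas {n m : ℕ} (m1 d : ℕ) (f : RPoly n) (a : Fin m → RPoly n)
    (K : Set (Fin n → ℝ)) (θ : Fin m → ℝ) : Prop :=
  (∀ i : Fin m, m1 ≤ (i : ℕ) → 0 ≤ θ i) ∧ (f - ∑ i, C (θ i) * a i) ∈ PdCone d K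

/-- The optimal value `ϑ*` of the linear conic problem (P). -/
def PVal {n m : ℕ} (m1 d : ℕ) (f : RPoly n) (a : Fin m → RPoly n) (b : Fin m → ℝ)
    (K : Set (Fin n → ℝ)) : ℝ :=
  sSup {v : ℝ | ∃ θ : Fin m → ℝ, PFeas m1 d f a K θ ∧ v = ∑ i, b i * θ i}

/-- Feasibility of `y` for the generalized moment problem (M). -/
def MFeas {n m : ℕ} (m1 d : ℕ) (a : Fin m → RPoly n) (b : Fin m → ℝ)
    (K : Set (Fin n → ℝ)) (y : (Fin n →₀ ℕ) → ℝ) : Prop :=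
  InMomentCone d K y ∧
  (∀ i : Fin m, (i : ℕ) < m1 → pairing (a i) y = b i) ∧
  (∀ i : Fin m, m1 ≤ (i : ℕ) → b i ≤ pairing (a i) y)

/-- The optimal value `φ*` of the generalized moment problem (M). -/
def MVal {n m : ℕ} (m1 d : ℕ) (f : RPoly n) (a : Fin m → RPoly n) (b : Fin m → ℝ)
    (K : Set (Fin n → ℝ)) : ℝ :=
  sInf {v : ℝ | ∃ y : (Fin n →₀ ℕ) → ℝ, MFeas m1 d a b K y ∧ v = pairing f y}

/-- The optimal value `ϑ_k` of the `k`th SOS relaxation of (P). -/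
def SOSRelaxVal {n m : ℕ} {ι κ : Type} (m1 : ℕ) (f : RPoly n) (a : Fin m → RPoly n)
    (b : Fin m → ℝ) (Es : Finset ι) (ge : ι → RPoly n) (Is : Finset κ) (gi : κ → RPoly n)
    (k : ℕ) : ℝ :=
  sSup {v : ℝ | ∃ θ : Fin m → ℝ, (∀ i : Fin m, m1 ≤ (i : ℕ) → 0 ≤ θ i) ∧
      (∃ p1 ∈ IdealDeg Es ge (2 * k), ∃ p2 ∈ QModDeg Is gi (2 * k),
        f - ∑ i, C (θ i) * a i = p1 + p2) ∧
      v = ∑ i, b i * θ i}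

/-- The semidefinite constraints of the `k`th moment relaxation:
the localizing vectors of the equality constraints vanish, and the localizing
matrices of the inequality constraints and the moment matrix are positive
semidefinite (stated equivalently via the associated quadratic forms). -/
def MomRelaxPSD {n : ℕ} {ι κ : Type} (Es : Finset ι) (ge : ι → RPoly n)
    (Is : Finset κ) (gi : κ → RPoly n) (k : ℕ) (w : (Fin n →₀ ℕ) → ℝ) : Prop :=
  (∀ j ∈ Es, ∀ p : RPoly n, p.totalDegree + (ge j).totalDegree ≤ 2 * k →
      pairing (ge j * p) w = 0) ∧
  (∀ j ∈ Is, ∀ p : RPoly n, p.totalDegree + ((gi j).totalDegree + 1) / 2 ≤ k →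
      0 ≤ pairing (gi j * p ^ 2) w) ∧
  (∀ p : RPoly n, p.totalDegree ≤ k → 0 ≤ pairing (p ^ 2) w)

/-- Feasibility of `w` for the `k`th moment relaxation of (M). -/
def GMomFeas {n m : ℕ} {ι κ : Type} (m1 : ℕ) (a : Fin m → RPoly n) (b : Fin m → ℝ)
    (Es : Finset ι) (ge : ι → RPoly n) (Is : Finset κ) (gi : κ → RPoly n) (k : ℕ)
    (w : (Fin n →₀ ℕ) → ℝ) : Prop :=
  (∀ i : Fin m, (i : ℕ) < m1 → pairing (a i) w = b i) ∧
  (∀ i : Fin m, m1 ≤ (i : ℕ) → b i ≤ pairing (a i) w) ∧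
  MomRelaxPSD Es ge Is gi k w

/-- The optimal value `φ_k` of the `k`th moment relaxation of (M). -/
def GMomVal {n m : ℕ} {ι κ : Type} (m1 : ℕ) (f : RPoly n) (a : Fin m → RPoly n)
    (b : Fin m → ℝ) (Es : Finset ι) (ge : ι → RPoly n) (Is : Finset κ) (gi : κ → RPoly n)
    (k : ℕ) : ℝ :=
  sInf {v : ℝ | ∃ w : (Fin n →₀ ℕ) → ℝ,
      GMomFeas m1 a b Es ge Is gi k w ∧ v = pairing f w}

/-- The optimal value `f_k^den` of the `k`th order relaxation with denominators. -/
def DenRelaxVal {n : ℕ} (E I : Finset ℕ) (c : ℕ → RPoly n) (f : RPoly n) (d k : ℕ) : ℝ :=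
  sSup {γ : ℝ | ∃ p1 ∈ IdealDeg E c (2 * k + d), ∃ p2 ∈ QModDeg I c (2 * k + d),
      (1 + ∑ i, (X i : RPoly n) ^ 2) ^ k * (f - C γ) = p1 + p2}


/-- The degree bound `d_K = max_j ⌈deg(c_j)/2⌉`. -/
def dKOrig {n : ℕ} (E I : Finset ℕ) (c : ℕ → RPoly n) : ℕ :=
  (E ∪ I).sup fun j => ((c j).totalDegree + 1) / 2

/-- The degree bound `d_0` for the GMP relaxations. -/
def d0GMP {n m : ℕ} (f : RPoly n) (a : Fin m → RPoly n) (E I : Finset ℕ)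
    (c : ℕ → RPoly n) : ℕ :=
  max ((f.totalDegree + 1) / 2)
    (max (dKOrig E I c) (Finset.univ.sup fun i : Fin m => ((a i).totalDegree + 1) / 2))

/-- The degree bound `d̃_K` for the homogenized constraining tuples. -/
def dKHom {n : ℕ} (E I : Finset ℕ) (c : ℕ → RPoly n) : ℕ :=
  max ((OS E).sup fun o => ((gEqH c o).totalDegree + 1) / 2)
      ((OS I).sup fun o => ((gInH c o).totalDegree + 1) / 2)

end

open MvPolynomial MeasureTheory

/-- multipliers of `M` -/
def multM {N : ℕ} (M : AddSubmonoid (RPoly N)) : Subsemiring (RPoly N) where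
  carrier := {t | ∀ m ∈ M, t * m ∈ M}
  mul_mem' := by
    intro a b ha hb m hm
    rw [mul_assoc]; exact ha _ (hb _ hm)
  one_mem' := by intro m hm; simpa using hm
  add_mem' := by
    intro a b ha hb m hm
    rw [add_mul]; exact M.add_mem (ha _ hm) (hb _ hm)
  zero_mem' := by intro m hm; simp

/-- the standing assumptions on the quadratic module -/
structure QMod {N : ℕ} (M : AddSubmonoid (RPoly N)) : Prop where
  one : (1 : RPoly N) ∈ M
  sq : ∀ q m : RPoly N, m ∈ M → q ^ 2 * m ∈ M
  sph : ∀ q : RPoly N, ((∑ i, (X i : RPoly N) ^ 2) - 1) * q ∈ M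

namespace QMod

theorem sq_mem {N : ℕ} {M : AddSubmonoid (RPoly N)} (h : QMod M) (q : RPoly N) : q ^ 2 ∈ multM M := fun m hm => h.sq q m hm

theorem C_mem {N : ℕ} {M : AddSubmonoid (RPoly N)} (h : QMod M) {c : ℝ} (hc : 0 ≤ c) : (C c : RPoly N) ∈ multM M := by
  have : (C c : RPoly N) = (C (Real.sqrt c)) ^ 2 := by
    rw [← C_pow, Real.sq_sqrt hc]
  rw [this]; exact h.sq_mem _

theorem mult_le {N : ℕ} {M : AddSubmonoid (RPoly N)} (h : QMod M) {t : RPoly N} (ht : t ∈ multM M) : t ∈ M := by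
  simpa using ht 1 h.one

theorem sph_mem {N : ℕ} {M : AddSubmonoid (RPoly N)} (h : QMod M) (q : RPoly N) : ((∑ i, (X i : RPoly N) ^ 2) - 1) * q ∈ multM M := by
  intro m hm
  rw [mul_assoc]; exact h.sph _

theorem one_sub_sq_mem {N : ℕ} {M : AddSubmonoid (RPoly N)} (h : QMod M) (i : Fin N) : (1 - X i ^ 2 : RPoly N) ∈ multM M := by
  have h1 : (1 - X i ^ 2 : RPoly N) =
      (∑ j ∈ Finset.univ.erase i, (X j : RPoly N) ^ 2)
        + ((∑ i, (X i : RPoly N) ^ 2) - 1) * (-1) := by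
    rw [← Finset.add_sum_erase Finset.univ _ (Finset.mem_univ i)]
    ring
  rw [h1]
  exact add_mem (sum_mem fun j _ => h.sq_mem _) (h.sph_mem _)

theorem half_mem {N : ℕ} {M : AddSubmonoid (RPoly N)} (h : QMod M) {t : RPoly N} (ht : t + t ∈ multM M) : t ∈ multM M := by
  have : t = C (1/2) * (t + t) := by
    have : (C (1/2) : RPoly N) * 2 = 1 := by
      rw [show (2 : RPoly N) = C 2 from rfl, ← C_mul]; norm_num
    linear_combination (-t) * this
  rw [this]; exact mul_mem (h.C_mem (by norm_num)) ht

theorem bdd_X {N : ℕ} {M : AddSubmonoid (RPoly N)} (h : QMod M) (i : Fin N) : (C 1 - X i : RPoly N) ∈ multM M ∧ (C 1 + X i : RPoly N) ∈ multM M := by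
  constructor
  · apply h.half_mem
    have : (C 1 - X i : RPoly N) + (C 1 - X i) = (1 - X i) ^ 2 + (1 - X i ^ 2) := by
      simp only [C_1]; ring
    rw [this]; exact add_mem (h.sq_mem _) (h.one_sub_sq_mem i)
  · apply h.half_mem
    have : (C 1 + X i : RPoly N) + (C 1 + X i) = (1 + X i) ^ 2 + (1 - X i ^ 2) := by
      simp only [C_1]; ring
    rw [this]; exact add_mem (h.sq_mem _) (h.one_sub_sq_mem i)

theorem bdd_mul {N : ℕ} {M : AddSubmonoid (RPoly N)} (h : QMod M) {a b w : RPoly N} {R S : ℝ}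
    (ha1 : C R - a ∈ multM M) (ha2 : C R + a ∈ multM M)
    (hb1 : C S * w - b ∈ multM M) (hb2 : C S * w + b ∈ multM M) :
    C (R * S) * w - a * b ∈ multM M ∧ C (R * S) * w + a * b ∈ multM M := by
  constructor
  · apply h.half_mem
    have : C (R * S) * w - a * b + (C (R * S) * w - a * b) =
      (C R + a) * (C S * w - b) + (C R - a) * (C S * w + b) := by
      rw [C_mul]; ring
    rw [this]; exact add_mem (mul_mem ha2 hb1) (mul_mem ha1 hb2)
  · apply h.half_mem
    have : C (R * S) * w + a * b + (C (R * S) * w + a * b) =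
      (C R + a) * (C S * w + b) + (C R - a) * (C S * w - b) := by
      rw [C_mul]; ring
    rw [this]; exact add_mem (mul_mem ha2 hb2) (mul_mem ha1 hb1)

theorem bdd {N : ℕ} {M : AddSubmonoid (RPoly N)} (h : QMod M) (a : RPoly N) : ∃ R : ℝ, 0 ≤ R ∧ C R - a ∈ multM M ∧ C R + a ∈ multM M := by
  induction a using MvPolynomial.induction_on with
  | C c =>
    refine ⟨|c|, abs_nonneg c, ?_, ?_⟩
    · rw [← C_sub]; exact h.C_mem (by linarith [le_abs_self c])
    · rw [← C_add]; exact h.C_mem (by linarith [neg_abs_le c])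
  | add p q hp hq =>
    obtain ⟨R, hR, h1, h2⟩ := hp
    obtain ⟨S, hS, h3, h4⟩ := hq
    refine ⟨R + S, by linarith, ?_, ?_⟩
    · have : C (R + S) - (p + q) = (C R - p) + (C S - q) := by rw [C_add]; ring
      rw [this]; exact add_mem h1 h3
    · have : C (R + S) + (p + q) = (C R + p) + (C S + q) := by rw [C_add]; ring
      rw [this]; exact add_mem h2 h4
  | mul_X p i hp =>
    obtain ⟨R, hR, h1, h2⟩ := hp
    obtain ⟨h3, h4⟩ := h.bdd_X i
    have := h.bdd_mul (w := 1) (S := 1) h1 h2 (by simpa using h3) (by simpa using h4)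
    exact ⟨R, hR, by simpa using this.1, by simpa using this.2⟩

end QMod

/-- the ideal of elements bounded by `w` -/
def bddIdeal {N : ℕ} {M : AddSubmonoid (RPoly N)} (h : QMod M) (w : RPoly N)
    : Ideal (RPoly N) where
  carrier := {b | ∃ R : ℝ, 0 ≤ R ∧ C R * w - b ∈ multM M ∧ C R * w + b ∈ multM M}
  add_mem' := by
    rintro p q ⟨R, hR, h1, h2⟩ ⟨S, hS, h3, h4⟩
    refine ⟨R + S, by linarith, ?_, ?_⟩
    · have : C (R + S) * w - (p + q) = (C R * w - p) + (C S * w - q) := by rw [C_add]; ring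
      rw [this]; exact add_mem h1 h3
    · have : C (R + S) * w + (p + q) = (C R * w + p) + (C S * w + q) := by rw [C_add]; ring
      rw [this]; exact add_mem h2 h4
  zero_mem' := ⟨0, le_refl _, by simp, by simp⟩
  smul_mem' := by
    rintro a b ⟨S, hS, h3, h4⟩
    obtain ⟨R, hR, h1, h2⟩ := h.bdd a
    have := h.bdd_mul h1 h2 h3 h4
    exact ⟨R * S, mul_nonneg hR hS, by simpa using this.1, by simpa using this.2⟩

theorem self_mem_bddIdeal {N : ℕ} {M : AddSubmonoid (RPoly N)} (h : QMod M) (w : RPoly N)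
    (hw : w ∈ multM M) : w ∈ bddIdeal h w :=
  ⟨1, zero_le_one, by simp, by simpa using add_mem hw hw⟩

/-- states on an ideal -/
def stateSet {N : ℕ} (M : AddSubmonoid (RPoly N)) (J : Ideal (RPoly N)) (w : J) :
    Set (J → ℝ) :=
  {φ | (∀ a b, φ (a + b) = φ a + φ b) ∧ (∀ (c : ℝ) a, φ (c • a) = c * φ a) ∧
    (∀ b : J, (b : RPoly N) ∈ M → 0 ≤ φ b) ∧ φ w = 1}

theorem exists_state {N : ℕ} {M : AddSubmonoid (RPoly N)} (h : QMod M) (w : RPoly N)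
    (hw : w ∈ multM M) (J : Ideal (RPoly N)) (hwm : w ∈ J)
    (hJm : ∀ b ∈ J, ∃ R : ℝ, 0 ≤ R ∧ C R * w - b ∈ multM M ∧ C R * w + b ∈ multM M)
    (G : RPoly N) (hGm : G ∈ J) (hG : G ∉ M) :
    ∃ φ ∈ stateSet M J ⟨w, hwm⟩, φ ⟨G, hGm⟩ ≤ 0 := by
  set wJ : J := ⟨w, hwm⟩ with hwJ
  have smulC : ∀ (c : ℝ) (b : J), ((c • b : J) : RPoly N) = C c * (b : RPoly N) := by
    intro c b; rw [← smul_eq_C_mul]; rfl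
  have hMC : ∀ (c : ℝ) (m : RPoly N), 0 ≤ c → m ∈ M → C c * m ∈ M :=
    fun c m hc hm => h.C_mem hc m hm
  -- basic facts
  obtain ⟨RG, hRG, hG1, hG2⟩ := hJm G hGm
  have hnegw : ∀ c : ℝ, 0 < c → -(C c * w) ∉ M := by
    intro c hc hcw
    apply hG
    have : G = (C RG * w + G) + C (RG / c) * (-(C c * w)) := by
      have : (C RG : RPoly N) = C (RG / c) * C c := by
        rw [← C_mul]; congr 1; field_simp
      rw [this]; ring
    rw [this]
    exact M.add_mem (h.mult_le hG2) (hMC _ _ (by positivity) hcw)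
  have hwne : wJ ≠ 0 := by
    intro h0
    have h1 : w = 0 := congrArg Subtype.val h0
    apply hnegw 1 one_pos
    rw [h1]; simp
  let s : PointedCone ℝ J :=
    { carrier := {b : J | ∃ t : ℝ, 0 ≤ t ∧ (b : RPoly N) + C t * G ∈ M}
      add_mem' := by
        rintro a b ⟨t, ht, hta⟩ ⟨r, hr, hrb⟩
        refine ⟨t + r, by linarith, ?_⟩
        have : ((a + b : J) : RPoly N) + C (t + r) * G = ((a : RPoly N) + C t * G) + ((b : RPoly N) + C r * G) := by
          rw [C_add]; push_cast; ring
        rw [this]; exact M.add_mem hta hrb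
      zero_mem' := ⟨0, le_refl _, by simp⟩
      smul_mem' := by
        rintro ⟨c, hc⟩ a ⟨t, ht, hta⟩
        refine ⟨c * t, mul_nonneg hc ht, ?_⟩
        have h1 : (((⟨c, hc⟩ : {c : ℝ // 0 ≤ c}) • a : J) : RPoly N) = C c * (a : RPoly N) := smulC c a
        rw [h1, C_mul, mul_assoc, ← mul_add]
        exact hMC _ _ hc hta }
  have hs : ∀ b : J, b ∈ s ↔ ∃ t : ℝ, 0 ≤ t ∧ (b : RPoly N) + C t * G ∈ M := fun b => Iff.rfl
  obtain ⟨g, hg1, hg2⟩ := riesz_extension s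
    (LinearPMap.mkSpanSingleton wJ (1 : ℝ) hwne) (by
      rintro ⟨x, hx⟩ hxs
      obtain ⟨c, rfl⟩ := Submodule.mem_span_singleton.1 hx
      rw [LinearPMap.mkSpanSingleton'_apply]
      simp only [RingHom.id_apply, smul_eq_mul, mul_one]
      by_contra hc
      push Not at hc
      obtain ⟨t, ht, htm⟩ := (hs _).1 hxs
      rw [smulC] at htm
      rcases ht.eq_or_lt with rfl | htp
      · apply hnegw (-c) (by linarith)
        simpa using htm
      · apply hG
        have : G = C (1 / t) * (C c * w + C t * G) + C (-c / t) * w := by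
          have h1 : (C (1 / t) * C t : RPoly N) = 1 := by
            rw [← C_mul, one_div, inv_mul_cancel₀ htp.ne', C_1]
          have h2 : (C (-c / t) : RPoly N) = - (C (1 / t) * C c) := by
            rw [← C_mul, ← C_neg]; congr 1; ring
          rw [h2]
          linear_combination (-G) * h1
        rw [this]
        refine M.add_mem (hMC _ _ (by positivity) htm) (hMC _ _ ?_ (h.mult_le hw))
        exact div_nonneg (by linarith) ht) (by
      intro y
      obtain ⟨R, hR, h1, h2⟩ := hJm y y.2
      refine ⟨⟨R • wJ, Submodule.mem_span_singleton.2 ⟨R, rfl⟩⟩, ?_⟩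
      rw [hs]
      refine ⟨0, le_refl _, ?_⟩
      simp only [Submodule.coe_add, smulC, C_0, zero_mul, add_zero]
      exact h.mult_le h2)
  refine ⟨g, ⟨fun a b => map_add g a b, fun c a => by simp, ?_, ?_⟩, ?_⟩
  · intro b hb
    exact hg2 b ((hs b).2 ⟨0, le_refl _, by simpa using hb⟩)
  · have := hg1 ⟨wJ, Submodule.mem_span_singleton_self _⟩
    rw [LinearPMap.mkSpanSingleton_apply] at this
    exact this
  · have := hg2 (-⟨G, hGm⟩) ((hs _).2 ⟨1, zero_le_one, by simp⟩)
    simpa using this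

open MvPolynomial MeasureTheory

theorem state_compact {N : ℕ} {M : AddSubmonoid (RPoly N)} (h : QMod M) (w : RPoly N)
    (J : Ideal (RPoly N)) (hwm : w ∈ J)
    (hJm : ∀ b ∈ J, ∃ R : ℝ, 0 ≤ R ∧ C R * w - b ∈ multM M ∧ C R * w + b ∈ multM M) :
    IsCompact (stateSet M J ⟨w, hwm⟩) := by
  have smulC : ∀ (c : ℝ) (b : J), ((c • b : J) : RPoly N) = C c * (b : RPoly N) := by
    intro c b; rw [← smul_eq_C_mul]; rfl
  choose R hR using hJm
  refine IsCompact.of_isClosed_subset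
    (isCompact_univ_pi (s := fun b : J => Set.Icc (-(R b b.2)) (R b b.2)) (fun b => isCompact_Icc)) ?_ ?_
  · have e : stateSet M J ⟨w, hwm⟩ =
      (⋂ a : J, ⋂ b : J, {φ : J → ℝ | φ (a + b) = φ a + φ b}) ∩
      ((⋂ c : ℝ, ⋂ a : J, {φ : J → ℝ | φ (c • a) = c * φ a}) ∩
      ((⋂ b : J, ⋂ _ : (b : RPoly N) ∈ M, {φ : J → ℝ | 0 ≤ φ b}) ∩
        {φ : J → ℝ | φ ⟨w, hwm⟩ = 1})) := by
      ext φ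
      simp only [stateSet, Set.mem_inter_iff, Set.mem_iInter, Set.mem_setOf_eq]
    rw [e]
    refine IsClosed.inter ?_ (IsClosed.inter ?_ (IsClosed.inter ?_ ?_))
    · refine isClosed_iInter fun a => isClosed_iInter fun b => isClosed_eq (by fun_prop) (by fun_prop)
    · refine isClosed_iInter fun a => isClosed_iInter fun b => isClosed_eq (by fun_prop) (by fun_prop)
    · refine isClosed_iInter fun a => isClosed_iInter fun b => isClosed_le (by fun_prop) (by fun_prop)
    · exact isClosed_eq (by fun_prop) (by fun_prop)
  · rintro φ ⟨ha, hs, hp, h1⟩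
    rw [Set.mem_univ_pi]
    intro b
    obtain ⟨hR0, h2, h3⟩ := hR b b.2
    have e1 := hp (R b b.2 • ⟨w, hwm⟩ + b) (by
      rw [Submodule.coe_add, smulC]; exact h.mult_le h3)
    have e2 := hp (R b b.2 • ⟨w, hwm⟩ + (-1 : ℝ) • b) (by
      rw [Submodule.coe_add, smulC, smulC]
      have := h.mult_le h2
      rw [sub_eq_add_neg] at this
      simpa using this)
    rw [ha, hs, h1] at e1
    rw [ha, hs, h1, hs] at e2
    constructor <;> linarith

theorem pure_state {N : ℕ} {M : AddSubmonoid (RPoly N)} (h : QMod M) (w : RPoly N)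
    (hw : w ∈ multM M) (J : Ideal (RPoly N)) (hwm : w ∈ J)
    (hJm : ∀ b ∈ J, ∃ R : ℝ, 0 ≤ R ∧ C R * w - b ∈ multM M ∧ C R * w + b ∈ multM M)
    (G : RPoly N) (hGm : G ∈ J) (hG : G ∉ M) :
    ∃ φ ∈ stateSet M J ⟨w, hwm⟩, φ ⟨G, hGm⟩ ≤ 0 ∧
      ∀ (a : RPoly N) (b : J), φ (a • b) = φ (a • ⟨w, hwm⟩) * φ b := by
  have smulC : ∀ (c : ℝ) (b : J), (c • b : J) = (C c : RPoly N) • b := by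
    intro c b; apply Subtype.ext
    change c • (b : RPoly N) = C c * (b : RPoly N)
    rw [← smul_eq_C_mul]
  set wJ : J := ⟨w, hwm⟩ with hwJ
  set S := stateSet M J wJ with hS
  have hcomp : IsCompact S := state_compact h w J hwm hJm
  obtain ⟨φ0, hφ0, hφ0G⟩ := exists_state h w hw J hwm hJm G hGm hG
  have hev : Continuous (fun φ : J → ℝ => φ ⟨G, hGm⟩) := continuous_apply _
  obtain ⟨φ1, hφ1, hmin⟩ := hcomp.exists_isMinOn ⟨φ0, hφ0⟩ hev.continuousOn
  set μ := φ1 ⟨G, hGm⟩ with hμ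
  have hμ0 : μ ≤ 0 := le_trans (hmin hφ0) hφ0G
  set Fc : Set (J → ℝ) := S ∩ {φ | φ ⟨G, hGm⟩ = μ} with hFc
  have hFcomp : IsCompact Fc := hcomp.inter_right (isClosed_eq hev continuous_const)
  obtain ⟨φ, hφ⟩ := hFcomp.extremePoints_nonempty ⟨φ1, hφ1, rfl⟩
  rw [mem_extremePoints_iff_left] at hφ
  obtain ⟨⟨hφS, hφG⟩, hext⟩ := hφ
  change φ ⟨G, hGm⟩ = μ at hφG
  obtain ⟨hadd, hsmul, hpos, hone⟩ := hφS
  refine ⟨φ, ⟨hadd, hsmul, hpos, hone⟩, hφG.trans_le hμ0, ?_⟩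
  -- positivity of the twisted functional
  have htw : ∀ a ∈ multM M, ∀ b : J, (b : RPoly N) ∈ M → 0 ≤ φ (a • b) := by
    intro a ha b hb
    exact hpos _ (ha _ hb)
  have hwM : (wJ : RPoly N) ∈ M := h.mult_le hw
  have hzero : ∀ a ∈ multM M, φ (a • wJ) = 0 → ∀ b : J, φ (a • b) = 0 := by
    intro a ha h0 b
    obtain ⟨R, hR, h1, h2⟩ := hJm b b.2
    have e1 := htw a ha (R • wJ + b) (by
      rw [smulC]; exact h.mult_le h2)
    have e2 := htw a ha (R • wJ + (-1 : ℝ) • b) (by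
      rw [smulC, smulC]
      have := h.mult_le h1
      rw [sub_eq_add_neg] at this
      simpa using this)
    rw [smul_add, hadd, smul_comm a R wJ, hsmul, h0] at e1
    rw [smul_add, hadd, smul_comm a R wJ, hsmul, h0, smul_comm a (-1 : ℝ) b, hsmul] at e2
    linarith
  have hsub : ∀ (a : RPoly N) (b : J), φ ((1 - a) • b) = φ b - φ (a • b) := by
    intro a b
    have : b = (1 - a) • b + a • b := by rw [← add_smul]; simp
    have h2 := congrArg φ this
    rw [hadd] at h2
    linarith
  -- multiplicativity for good elements
  have hgood : ∀ a : RPoly N, a ∈ multM M → 1 - a ∈ multM M →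
      ∀ b : J, φ (a • b) = φ (a • wJ) * φ b := by
    intro a ha ha' b
    set t := φ (a • wJ) with ht
    have ht0 : 0 ≤ t := htw a ha _ hwM
    have ht1 : t ≤ 1 := by
      have := htw _ ha' _ hwM
      rw [hsub, hone] at this; linarith
    rcases ht0.eq_or_lt with h0 | h0
    · rw [hzero a ha h0.symm b, ← h0, zero_mul]
    rcases ht1.eq_or_lt with h1 | h1
    · have := hzero _ ha' (by rw [hsub, hone, ← ht, h1, sub_self]) b
      rw [hsub] at this
      rw [h1]; linarith
    have h1' : 0 < 1 - t := by linarith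
    set φa : J → ℝ := fun b => t⁻¹ * φ (a • b) with hφa
    set φb : J → ℝ := fun b => (1 - t)⁻¹ * φ ((1 - a) • b) with hφb
    have hA : φa ∈ S := by
      refine ⟨fun x y => ?_, fun c x => ?_, fun x hx => ?_, ?_⟩
      · simp only [hφa, smul_add, hadd]; ring
      · simp only [hφa, smul_comm a c, hsmul]; ring
      · exact mul_nonneg (inv_nonneg.2 ht0) (htw a ha x hx)
      · simp only [hφa]; rw [← ht]; exact inv_mul_cancel₀ h0.ne'
    have hB : φb ∈ S := by
      refine ⟨fun x y => ?_, fun c x => ?_, fun x hx => ?_, ?_⟩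
      · simp only [hφb, smul_add, hadd]; ring
      · simp only [hφb, smul_comm (1 - a) c, hsmul]; ring
      · exact mul_nonneg (inv_nonneg.2 h1'.le) (htw _ ha' x hx)
      · simp only [hφb]; rw [hsub, hone, ← ht]; exact inv_mul_cancel₀ h1'.ne'
    have hcomb : ∀ x, t * φa x + (1 - t) * φb x = φ x := by
      intro x
      simp only [hφa, hφb, ← mul_assoc]
      rw [mul_inv_cancel₀ h0.ne', mul_inv_cancel₀ h1'.ne', hsub]; ring
    have mA : μ ≤ φa ⟨G, hGm⟩ := hmin hA
    have mB : μ ≤ φb ⟨G, hGm⟩ := hmin hB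
    have hc := hcomb ⟨G, hGm⟩
    rw [hφG] at hc
    have eA : φa ⟨G, hGm⟩ = μ := by nlinarith
    have eB : φb ⟨G, hGm⟩ = μ := by nlinarith
    have := hext φa ⟨hA, eA⟩ φb ⟨hB, eB⟩ ⟨t, 1 - t, h0, h1', by ring, by
      funext x; simpa using hcomb x⟩
    have h3 := congrFun this b
    simp only [hφa] at h3
    rw [← h3]; field_simp
  -- the set of multiplicative elements
  intro a
  induction a using MvPolynomial.induction_on with
  | C c =>
    intro b
    rw [← smulC, ← smulC, hsmul, hsmul, hone]; ring
  | add p q hp hq =>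
    intro b
    rw [add_smul, add_smul, hadd, hadd, hp b, hq b]; ring
  | mul_X p i hp =>
    have hX : ∀ b : J, φ ((X i : RPoly N) • b) = φ ((X i : RPoly N) • wJ) * φ b := by
      have g1 := hgood (C (1/4) * (1 + X i) ^ 2)
        (mul_mem (h.C_mem (by norm_num)) (h.sq_mem _)) (by
          have : (1 - C (1/4) * (1 + X i) ^ 2 : RPoly N) =
              C (1/2) * (1 - X i ^ 2) + C (1/4) * (1 - X i) ^ 2 := by
            have e1 : (C (1/2) : RPoly N) = 2 * C (1/4) := by
              rw [show (2 : RPoly N) = C 2 from rfl, ← C_mul]; norm_num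
            have e2 : (4 * C (1/4) : RPoly N) = 1 := by
              rw [show (4 : RPoly N) = C 4 from rfl, ← C_mul]; norm_num
            rw [e1]; linear_combination (-1 : RPoly N) * e2
          rw [this]
          exact add_mem (mul_mem (h.C_mem (by norm_num)) (h.one_sub_sq_mem i))
            (mul_mem (h.C_mem (by norm_num)) (h.sq_mem _)))
      have g2 := hgood (C (1/4) * (1 - X i) ^ 2)
        (mul_mem (h.C_mem (by norm_num)) (h.sq_mem _)) (by
          have : (1 - C (1/4) * (1 - X i) ^ 2 : RPoly N) =
              C (1/2) * (1 - X i ^ 2) + C (1/4) * (1 + X i) ^ 2 := by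
            have e1 : (C (1/2) : RPoly N) = 2 * C (1/4) := by
              rw [show (2 : RPoly N) = C 2 from rfl, ← C_mul]; norm_num
            have e2 : (4 * C (1/4) : RPoly N) = 1 := by
              rw [show (4 : RPoly N) = C 4 from rfl, ← C_mul]; norm_num
            rw [e1]; linear_combination (-1 : RPoly N) * e2
          rw [this]
          exact add_mem (mul_mem (h.C_mem (by norm_num)) (h.one_sub_sq_mem i))
            (mul_mem (h.C_mem (by norm_num)) (h.sq_mem _)))
      have hdec : ∀ b : J, φ ((C (1/4) * (1 + X i) ^ 2 : RPoly N) • b) =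
          φ ((X i : RPoly N) • b) + φ ((C (1/4) * (1 - X i) ^ 2 : RPoly N) • b) := by
        intro b
        rw [← hadd, ← add_smul]
        congr 2
        have e2 : (4 * C (1/4) : RPoly N) = 1 := by
          rw [show (4 : RPoly N) = C 4 from rfl, ← C_mul]; norm_num
        linear_combination (X i : RPoly N) * e2
      intro b
      have a1 := hdec b
      have a2 := hdec wJ
      rw [g1 b, g2 b, a2] at a1
      linarith
    intro b
    rw [mul_smul, hp, hX, mul_smul, hp (X i • wJ)]
    ring

theorem pure_state_point {N : ℕ} {M : AddSubmonoid (RPoly N)} (h : QMod M) (w : RPoly N)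
    (hw : w ∈ multM M) (J : Ideal (RPoly N)) (hwm : w ∈ J)
    (hJm : ∀ b ∈ J, ∃ R : ℝ, 0 ≤ R ∧ C R * w - b ∈ multM M ∧ C R * w + b ∈ multM M)
    (G : RPoly N) (hGm : G ∈ J) (hG : G ∉ M) :
    ∃ φ ∈ stateSet M J ⟨w, hwm⟩, φ ⟨G, hGm⟩ ≤ 0 ∧ ∃ x : Fin N → ℝ,
      (∀ m ∈ M, 0 ≤ eval x m) ∧
      ∀ (a : RPoly N) (b : J), φ (a • b) = eval x a * φ b := by
  obtain ⟨φ, hφ, h0, hm⟩ := pure_state h w hw J hwm hJm G hGm hG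
  have smulC : ∀ (c : ℝ) (b : J), (c • b : J) = (C c : RPoly N) • b := by
    intro c b; apply Subtype.ext
    change c • (b : RPoly N) = C c * (b : RPoly N)
    rw [← smul_eq_C_mul]
  have hev : ∀ a : RPoly N, φ (a • ⟨w, hwm⟩) =
      eval (fun i => φ ((X i : RPoly N) • ⟨w, hwm⟩)) a := by
    intro a
    induction a using MvPolynomial.induction_on with
    | C c => rw [← smulC, hφ.2.1, hφ.2.2.2, eval_C, mul_one]
    | add p q hp hq => rw [add_smul, hφ.1, hp, hq, map_add]
    | mul_X p i hp => rw [mul_smul, hm, hp, map_mul, eval_X]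
  refine ⟨φ, hφ, h0, fun i => φ ((X i : RPoly N) • ⟨w, hwm⟩), ?_, ?_⟩
  · intro m hmM
    rw [← hev]
    apply hφ.2.2.1
    change m * w ∈ M
    rw [mul_comm]; exact hw m hmM
  · intro a b
    rw [hm, hev]

open MvPolynomial MeasureTheory

/-- maximal ideal of a point -/
noncomputable def mU {N : ℕ} (u : Fin N → ℝ) : Ideal (RPoly N) := RingHom.ker (eval u)

/-- shifted coordinate -/
noncomputable def yv {N : ℕ} (u : Fin N → ℝ) (i : Fin N) : RPoly N := X i - C (u i)

theorem mem_mU {N : ℕ} {u : Fin N → ℝ} {p : RPoly N} : p ∈ mU u ↔ eval u p = 0 := RingHom.mem_ker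

theorem yv_mem {N : ℕ} (u : Fin N → ℝ) (i : Fin N) : yv u i ∈ mU u := by
  rw [mem_mU]; simp [yv]

theorem taylor {N : ℕ} (u : Fin N → ℝ) (p : RPoly N) :
    p - (C (eval u p) + ∑ i, C (gradP p u i) * yv u i
      + ∑ i, ∑ j, C (hessP p u i j / 2) * (yv u i * yv u j)) ∈ mU u ^ 3 := by
  induction p using MvPolynomial.induction_on with
  | C c => simp [gradP, hessP]
  | add p q hp hq =>
    have := add_mem hp hq
    convert this using 1
    simp only [gradP, hessP, map_add, add_mul, add_div, Finset.sum_add_distrib]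
    ring
  | mul_X p k hp =>
    set L := ∑ i, C (gradP p u i) * yv u i with hL
    set Q := ∑ i, ∑ j, C (hessP p u i j / 2) * (yv u i * yv u j) with hQ
    have hQm : Q * yv u k ∈ mU u ^ 3 := by
      rw [pow_succ]
      refine Ideal.mul_mem_mul ?_ (yv_mem u k)
      refine sum_mem fun i _ => sum_mem fun j _ => Ideal.mul_mem_left _ _ ?_
      rw [pow_two]; exact Ideal.mul_mem_mul (yv_mem u i) (yv_mem u j)
    have e1 : ∑ i, C (gradP (p * X k) u i) * yv u i = C (u k) * L + C (eval u p) * yv u k := by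
      have : ∀ i, C (gradP (p * X k) u i) * yv u i =
          C (u k) * (C (gradP p u i) * yv u i) + (if i = k then C (eval u p) * yv u k else 0) := by
        intro i
        by_cases h : i = k
        · subst h
          simp [gradP, pderiv_X_self, Derivation.leibniz]; ring
        · simp [gradP, pderiv_X_of_ne (Ne.symm h), Derivation.leibniz, h]; ring
      simp only [this, Finset.sum_add_distrib, ← Finset.mul_sum]
      simp [hL]
    have e2 : ∑ i, ∑ j, C (hessP (p * X k) u i j / 2) * (yv u i * yv u j)
        = C (u k) * Q + L * yv u k := by
      have hd : ∀ i j, hessP (p * X k) u i j = u k * hessP p u i j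
          + (if j = k then gradP p u i else 0) + (if i = k then gradP p u j else 0) := by
        intro i j
        simp only [hessP, gradP, Derivation.leibniz, map_add, smul_eq_mul, map_mul, eval_X,
          pderiv_X, Pi.single_apply]
        have hs : ∀ a b : Fin N, eval u ((pderiv a) (if b = k then (1 : RPoly N) else 0)) = 0 := by
          intro a b; split_ifs <;> simp
        have hs2 : ∀ a b : Fin N, eval u ((pderiv a) (if k = b then (1 : RPoly N) else 0)) = 0 := by
          intro a b; split_ifs <;> simp
        have hk : ∀ b : Fin N, (k = b) = (b = k) := fun b => propext eq_comm
        simp only [hk, hs, apply_ite (eval u), map_one, map_zero]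
        split_ifs <;> ring
      have : ∀ i j, C (hessP (p * X k) u i j / 2) * (yv u i * yv u j) =
          C (u k) * (C (hessP p u i j / 2) * (yv u i * yv u j))
          + (if j = k then C (1/2) * (C (gradP p u i) * yv u i * yv u k) else 0)
          + (if i = k then C (1/2) * (C (gradP p u j) * yv u j * yv u k) else 0) := by
        intro i j
        rw [hd]
        by_cases h1 : i = k <;> by_cases h2 : j = k <;> simp [h1, h2, add_div, mul_div_assoc] <;>
          simp only [div_eq_mul_inv, C_mul] <;> ring
      simp only [this, Finset.sum_add_distrib, ← Finset.mul_sum]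
      have a1 : ∑ i, ∑ j, (if j = k then C (1/2) * (C (gradP p u i) * yv u i * yv u k) else 0)
          = C (1/2) * (L * yv u k) := by
        simp [hL, Finset.mul_sum, Finset.sum_mul]
      have a2 : ∑ i, ∑ j, (if i = k then C (1/2) * (C (gradP p u j) * yv u j * yv u k) else 0)
          = C (1/2) * (L * yv u k) := by
        rw [Finset.sum_comm]
        simp [hL, Finset.mul_sum, Finset.sum_mul]
      rw [a1, a2]
      have e2 : (2 * C (1/2) : RPoly N) = 1 := by
        rw [show (2 : RPoly N) = C 2 from rfl, ← C_mul]; norm_num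
      linear_combination (L * yv u k) * e2
    rw [e1, e2]
    have e3 : p * X k - (C (eval u (p * X k)) + (C (u k) * L + C (eval u p) * yv u k)
        + (C (u k) * Q + L * yv u k)) =
        (p - (C (eval u p) + L + Q)) * X k + Q * yv u k := by
      simp only [map_mul, eval_X, yv]; ring
    rw [e3]
    exact add_mem (Ideal.mul_mem_right _ _ hp) hQm

theorem mem_sq_grad {N : ℕ} {u : Fin N → ℝ} {p : RPoly N} (hp : p ∈ mU u ^ 2) :
    eval u p = 0 ∧ ∀ i, gradP p u i = 0 := by
  rw [pow_two] at hp
  refine Submodule.mul_induction_on hp ?_ ?_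
  · intro a ha b hb
    rw [mem_mU] at ha hb
    refine ⟨by simp [ha], fun i => ?_⟩
    simp [gradP, Derivation.leibniz, ha, hb]
  · rintro a b ⟨h1, h2⟩ ⟨h3, h4⟩
    refine ⟨by simp [h1, h3], fun i => ?_⟩
    have := h2 i; have := h4 i
    simp only [gradP, map_add] at *
    linarith

theorem jet_of_mem_sq {N : ℕ} {u : Fin N → ℝ} {p : RPoly N} (hp : p ∈ mU u ^ 2) :
    p - ∑ i, ∑ j, C (hessP p u i j / 2) * (yv u i * yv u j) ∈ mU u ^ 3 := by
  obtain ⟨h1, h2⟩ := mem_sq_grad hp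
  have := taylor u p
  simpa [h1, h2] using this

/-- positive definite second order jet -/
def PosJet {N : ℕ} (u : Fin N → ℝ) (P : RPoly N) : Prop :=
  ∃ ε : ℝ, 0 < ε ∧ ∃ B : Matrix (Fin N) (Fin N) ℝ,
    P - (∑ i, C ε * yv u i ^ 2 + ∑ k, (∑ i, C (B k i) * yv u i) ^ 2) ∈ mU u ^ 3

theorem PosJet.mem_sq {N : ℕ} {u : Fin N → ℝ} {P : RPoly N} (h : PosJet u P) : P ∈ mU u ^ 2 := by
  obtain ⟨ε, hε, B, hB⟩ := h
  have h1 := Ideal.pow_le_pow_right (show 2 ≤ 3 by norm_num) hB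
  have h2 : (∑ i, C ε * yv u i ^ 2 + ∑ k, (∑ i, C (B k i) * yv u i) ^ 2) ∈ mU u ^ 2 := by
    refine add_mem (sum_mem fun i _ => Ideal.mul_mem_left _ _ ?_) (sum_mem fun k _ => ?_)
    · exact Ideal.pow_mem_pow (yv_mem u i) 2
    · exact Ideal.pow_mem_pow (sum_mem fun i _ => Ideal.mul_mem_left _ _ (yv_mem u i)) 2
  have := add_mem h1 h2
  simpa using this

theorem PosJet.congr {N : ℕ} {u : Fin N → ℝ} {P Q : RPoly N} (h : PosJet u P)
    (hPQ : Q - P ∈ mU u ^ 3) : PosJet u Q := by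
  obtain ⟨ε, hε, B, hB⟩ := h
  refine ⟨ε, hε, B, ?_⟩
  have := add_mem hPQ hB
  simpa using this

theorem mU_coprime {N : ℕ} {u v : Fin N → ℝ} (huv : u ≠ v) : IsCoprime (mU u) (mU v) := by
  have hs : ∀ x : Fin N → ℝ, Function.Surjective (eval x : RPoly N →+* ℝ) := fun x r => ⟨C r, by simp⟩
  haveI : (mU u).IsMaximal := RingHom.ker_isMaximal_of_surjective _ (hs u)
  haveI : (mU v).IsMaximal := RingHom.ker_isMaximal_of_surjective _ (hs v)
  apply Ideal.isCoprime_of_isMaximal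
  intro h
  apply huv
  funext i
  have h1 : yv u i ∈ mU v := h ▸ yv_mem u i
  rw [mem_mU] at h1
  simp [yv] at h1
  linarith

theorem mem_prod_sq {N : ℕ} (Z : Finset (Fin N → ℝ)) (G : RPoly N)
    (hG : ∀ u ∈ Z, G ∈ mU u ^ 2) : G ∈ (∏ u ∈ Z, mU u) ^ 2 := by
  classical
  rw [← Finset.prod_pow]
  induction Z using Finset.induction_on with
  | empty => simp
  | insert a s ha ih =>
    rw [Finset.prod_insert ha]
    have hc : IsCoprime (mU a ^ 2) (∏ u ∈ s, mU u ^ 2) := by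
      apply IsCoprime.prod_right
      intro v hv
      apply IsCoprime.pow
      apply mU_coprime
      rintro rfl; exact ha hv
    rw [← Ideal.inf_eq_mul_of_isCoprime hc]
    exact ⟨hG a (Finset.mem_insert_self _ _), ih fun u hu => hG u (Finset.mem_insert_of_mem hu)⟩

theorem exists_sep {N : ℕ} (Z : Finset (Fin N → ℝ)) (u : Fin N → ℝ) :
    ∃ e : RPoly N, e - 1 ∈ mU u ^ 2 ∧ (∀ v ∈ Z, v ≠ u → e ∈ mU v ^ 2) := by
  classical
  have hc : IsCoprime (mU u ^ 2) (∏ v ∈ Z.erase u, mU v ^ 2) := by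
    apply IsCoprime.prod_right
    intro v hv
    apply IsCoprime.pow
    apply mU_coprime
    exact (Finset.ne_of_mem_erase hv).symm
  obtain ⟨a, ha, b, hb, hab⟩ := Ideal.isCoprime_iff_exists.1 hc
  refine ⟨b, ?_, fun v hv hvu => ?_⟩
  · rw [show b - 1 = -a by linear_combination hab]
    exact neg_mem ha
  · exact Ideal.prod_le_inf.trans (Finset.inf_le (Finset.mem_erase.2 ⟨hvu, hv⟩)) hb

open MvPolynomial MeasureTheory

theorem state_total {N : ℕ} {M : AddSubmonoid (RPoly N)} (h : QMod M) (w : RPoly N)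
    (hw : w ∈ multM M) 
    (G : RPoly N) (hGm : G ∈ bddIdeal h w) (hG : G ∉ M) :
    ∃ ψ : RPoly N → ℝ, (∀ a ∈ bddIdeal h w, ∀ b ∈ bddIdeal h w, ψ (a + b) = ψ a + ψ b) ∧
      (∀ b ∈ bddIdeal h w, b ∈ M → 0 ≤ ψ b) ∧ ψ w = 1 ∧ ψ G ≤ 0 ∧ ∃ x : Fin N → ℝ,
      (∀ m ∈ M, 0 ≤ eval x m) ∧
      ∀ (a : RPoly N), ∀ b ∈ bddIdeal h w, ψ (a * b) = eval x a * ψ b := by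
  classical
  obtain ⟨φ, hφ, h0, x, hx, hm⟩ := pure_state_point h w hw (bddIdeal h w)
    (self_mem_bddIdeal h w hw) (fun b hb => hb) G hGm hG
  have key : ∀ p (hp : p ∈ bddIdeal h w), (fun p => if hp : p ∈ bddIdeal h w then φ ⟨p, hp⟩ else 0) p
    = φ ⟨p, hp⟩ := fun p hp => dif_pos hp
  refine ⟨fun p => if hp : p ∈ bddIdeal h w then φ ⟨p, hp⟩ else 0, ?_, ?_, ?_, ?_, x, hx, ?_⟩
  · intro a ha b hb
    rw [key a ha, key b hb, key _ (add_mem ha hb)]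
    exact hφ.1 ⟨a, ha⟩ ⟨b, hb⟩
  · intro b hb hbM
    rw [key b hb]; exact hφ.2.2.1 _ hbM
  · rw [key w (self_mem_bddIdeal h w hw)]; exact hφ.2.2.2
  · rw [key G hGm]; exact h0
  · intro a b hb
    rw [key b hb, key _ (Ideal.mul_mem_left _ a hb)]
    exact hm a ⟨b, hb⟩

theorem posjet_mem {N : ℕ} {M : AddSubmonoid (RPoly N)} (h : QMod M)
    (Z : Finset (Fin N → ℝ)) (G : RPoly N) (hJ : ∀ u ∈ Z, PosJet u G)
    (hpos : ∀ x, (∀ m ∈ M, 0 ≤ eval x m) → x ∉ Z → 0 < eval x G) : G ∈ M := by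
  classical
  by_contra hG
  set J0 : Ideal (RPoly N) := ∏ u ∈ Z, mU u with hJ0
  obtain ⟨s, hs⟩ : J0.FG := IsNoetherian.noetherian J0
  have hsJ : ∀ p ∈ s, p ∈ J0 := fun p hp => hs ▸ Ideal.subset_span hp
  set w : RPoly N := ∑ p ∈ s, p ^ 2 with hwdef
  have hw : w ∈ multM M := sum_mem fun p _ => h.sq_mem p
  have hsing : ∀ p ∈ s, w - p ^ 2 ∈ multM M := by
    intro p hp
    rw [hwdef, ← Finset.sum_erase_add s _ hp, add_sub_cancel_right]
    exact sum_mem fun p _ => h.sq_mem p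
  have hJ2 : J0 ^ 2 ≤ bddIdeal h w := by
    rw [pow_two, ← hs, Ideal.span_mul_span, Ideal.span_le]
    intro z hz
    obtain ⟨p, hp, q, hq, rfl⟩ : ∃ p ∈ s, ∃ q ∈ s, p * q = z := by
      simpa using Set.mem_mul.1 hz
    refine ⟨1, zero_le_one, ?_, ?_⟩
    · apply h.half_mem
      have : C 1 * w - p * q + (C 1 * w - p * q) = (w - p^2) + (w - q^2) + (p - q)^2 := by
        rw [C_1]; ring
      rw [this]
      exact add_mem (add_mem (hsing p hp) (hsing q hq)) (h.sq_mem _)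
    · apply h.half_mem
      have : C 1 * w + p * q + (C 1 * w + p * q) = (w - p^2) + (w - q^2) + (p + q)^2 := by
        rw [C_1]; ring
      rw [this]
      exact add_mem (add_mem (hsing p hp) (hsing q hq)) (h.sq_mem _)
  have hGJ : G ∈ bddIdeal h w := hJ2 (mem_prod_sq Z G fun u hu => (hJ u hu).mem_sq)
  obtain ⟨ψ, hadd, hnn, hψw, hψG, x, hx, hmul⟩ := state_total h w hw G hGJ hG
  have hJ0le : ∀ u ∈ Z, J0 ≤ mU u := fun u hu => Ideal.prod_le_inf.trans (Finset.inf_le hu)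
  have hwJ : w ∈ bddIdeal h w := self_mem_bddIdeal h w hw
  by_cases hwx : eval x w = 0
  · -- x is a zero
    have hpx : ∀ p ∈ s, eval x p = 0 := by
      intro p hp
      have h1 : ∑ p ∈ s, (eval x p) ^ 2 = 0 := by simpa [hwdef] using hwx
      have := (Finset.sum_eq_zero_iff_of_nonneg (fun p _ => sq_nonneg (eval x p))).1 h1 p hp
      exact pow_eq_zero_iff (two_ne_zero) |>.1 this
    have hJx : J0 ≤ mU x := by
      rw [← hs]
      exact Ideal.span_le.2 fun p hp => mem_mU.2 (hpx p hp)
    have hxZ : x ∈ Z := by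
      haveI : (mU x).IsPrime := RingHom.ker_isPrime _
      obtain ⟨u, hu, hux⟩ := (Ideal.IsPrime.prod_le this).1 hJx
      have : u = x := by
        funext i
        have := mem_mU.1 (hux (yv_mem u i))
        simp [yv] at this
        linarith
      exact this ▸ hu
    obtain ⟨e, he1, he2⟩ := exists_sep Z x
    have hex : eval x e = 1 := by
      have := (mem_sq_grad he1).1
      simp at this; linarith
    have hemem : ∀ P ∈ mU x ^ 2, e ^ 2 * P ∈ bddIdeal h w := by
      intro P hP
      apply hJ2
      apply mem_prod_sq
      intro v hv
      by_cases hvx : v = x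
      · subst hvx; exact Ideal.mul_mem_left _ _ hP
      · apply Ideal.mul_mem_right
        rw [pow_two e]
        exact Ideal.mul_mem_left _ _ (he2 v hv hvx)
    set χ : RPoly N → ℝ := fun P => ψ (e ^ 2 * P) with hχ
    have χadd : ∀ a ∈ mU x ^ 2, ∀ b ∈ mU x ^ 2, χ (a + b) = χ a + χ b := by
      intro a ha b hb
      simp only [hχ, mul_add]
      exact hadd _ (hemem a ha) _ (hemem b hb)
    have χmul : ∀ a, ∀ b ∈ mU x ^ 2, χ (a * b) = eval x a * χ b := by
      intro a b hb
      simp only [hχ]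
      rw [show e ^ 2 * (a * b) = a * (e ^ 2 * b) by ring]
      exact hmul _ _ (hemem b hb)
    have χzero : χ 0 = 0 := by
      have := χadd 0 (zero_mem _) 0 (zero_mem _)
      simp at this; linarith
    have χsum : ∀ (t : Finset (Fin N)) (g : Fin N → RPoly N), (∀ i ∈ t, g i ∈ mU x ^ 2) →
        χ (∑ i ∈ t, g i) = ∑ i ∈ t, χ (g i) := by
      intro t g hg
      induction t using Finset.induction_on with
      | empty => simpa using χzero
      | insert a t ha ih =>
        rw [Finset.sum_insert ha, Finset.sum_insert ha, χadd _ (hg a (by simp)) _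
          (sum_mem fun i hi => hg i (by simp [hi])), ih fun i hi => hg i (by simp [hi])]
    have χcube : ∀ R ∈ mU x ^ 3, χ R = 0 := by
      intro R hR
      have hR2 : R ∈ mU x ^ 2 ∧ χ R = 0 := by
        rw [pow_succ', ] at hR
        refine Submodule.mul_induction_on hR ?_ ?_
        · intro a ha b hb
          refine ⟨Ideal.mul_mem_left _ _ hb, ?_⟩
          rw [χmul a b hb, mem_mU.1 ha, zero_mul]
        · rintro a b ⟨h1, h2⟩ ⟨h3, h4⟩
          exact ⟨add_mem h1 h3, by rw [χadd a h1 b h3, h2, h4, add_zero]⟩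
      exact hR2.2
    have χcongr : ∀ P ∈ mU x ^ 2, ∀ Q ∈ mU x ^ 2, P - Q ∈ mU x ^ 3 → χ P = χ Q := by
      intro P hP Q hQ hPQ
      have := χadd Q hQ (P - Q) (sub_mem hP hQ)
      rw [χcube _ hPQ] at this
      simpa using this
    have χψ : ∀ P ∈ mU x ^ 2, P ∈ bddIdeal h w → χ P = ψ P := by
      intro P hP hPJ
      simp only [hχ]
      rw [hmul _ _ hPJ]; simp [hex]
    have χsq : ∀ q ∈ mU x, 0 ≤ χ (q ^ 2) := by
      intro q hq
      apply hnn _ (hemem _ (Ideal.pow_mem_pow hq 2))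
      rw [← mul_pow]; exact h.mult_le (h.sq_mem _)
    have hyy : ∀ i j, yv x i * yv x j ∈ mU x ^ 2 := fun i j => by
      rw [pow_two]; exact Ideal.mul_mem_mul (yv_mem x i) (yv_mem x j)
    have hy2 : ∀ i, yv x i ^ 2 ∈ mU x ^ 2 := fun i => Ideal.pow_mem_pow (yv_mem x i) 2
    obtain ⟨ε, hε, B, hB⟩ := hJ x hxZ
    have hG2 := (hJ x hxZ).mem_sq
    have hlin : ∀ k, (∑ i, C (B k i) * yv x i) ∈ mU x := fun k =>
      sum_mem fun i _ => Ideal.mul_mem_left _ _ (yv_mem x i)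
    have m1 : ∑ i, C ε * yv x i ^ 2 ∈ mU x ^ 2 := sum_mem fun i _ => Ideal.mul_mem_left _ _ (hy2 i)
    have m2 : ∑ k, (∑ i, C (B k i) * yv x i) ^ 2 ∈ mU x ^ 2 :=
      sum_mem fun k _ => Ideal.pow_mem_pow (hlin k) 2
    have e1 : χ G = ∑ i, ε * χ (yv x i ^ 2) + ∑ k, χ ((∑ i, C (B k i) * yv x i) ^ 2) := by
      rw [χcongr G hG2 _ (add_mem m1 m2) hB, χadd _ m1 _ m2,
        χsum _ _ (fun i _ => Ideal.mul_mem_left _ _ (hy2 i)),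
        χsum _ _ (fun k _ => Ideal.pow_mem_pow (hlin k) 2)]
      congr 1
      exact Finset.sum_congr rfl fun i _ => by rw [χmul _ _ (hy2 i), eval_C]
    have n2 : 0 ≤ ∑ k, χ ((∑ i, C (B k i) * yv x i) ^ 2) :=
      Finset.sum_nonneg fun k _ => χsq _ (hlin k)
    have n1 : ∀ i ∈ Finset.univ, 0 ≤ ε * χ (yv x i ^ 2) := fun i _ =>
      mul_nonneg hε.le (χsq _ (yv_mem x i))
    have hsum0 : ∑ i, ε * χ (yv x i ^ 2) = 0 := by
      apply le_antisymm _ (Finset.sum_nonneg n1)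
      rw [← χψ G hG2 hGJ] at hψG
      linarith
    have z1 : ∀ i, χ (yv x i ^ 2) = 0 := by
      intro i
      have := (Finset.sum_eq_zero_iff_of_nonneg n1).1 hsum0 i (Finset.mem_univ i)
      rcases mul_eq_zero.1 this with h1 | h1
      · exact absurd h1 hε.ne'
      · exact h1
    have z2 : ∀ i j, χ (yv x i * yv x j) = 0 := by
      intro i j
      have p1 := χsq _ (add_mem (yv_mem x i) (yv_mem x j))
      have p2 := χsq _ (sub_mem (yv_mem x i) (yv_mem x j))
      rw [show (yv x i + yv x j) ^ 2 = (yv x i ^ 2 + yv x j ^ 2) + C 2 * (yv x i * yv x j) by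
        rw [show (C 2 : RPoly N) = 2 from rfl]; ring,
        χadd _ (add_mem (hy2 i) (hy2 j)) _ (Ideal.mul_mem_left _ _ (hyy i j)),
        χadd _ (hy2 i) _ (hy2 j), z1, z1, χmul _ _ (hyy i j), eval_C] at p1
      rw [show (yv x i - yv x j) ^ 2 = (yv x i ^ 2 + yv x j ^ 2) + C (-2) * (yv x i * yv x j) by
        rw [C_neg, show (C 2 : RPoly N) = 2 from rfl]; ring,
        χadd _ (add_mem (hy2 i) (hy2 j)) _ (Ideal.mul_mem_left _ _ (hyy i j)),
        χadd _ (hy2 i) _ (hy2 j), z1, z1, χmul _ _ (hyy i j), eval_C] at p2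
      linarith
    have hw2 : w ∈ mU x ^ 2 := sum_mem fun p hp => Ideal.pow_mem_pow (mem_mU.2 (hpx p hp)) 2
    have mm : ∀ i, ∑ j, C (hessP w x i j / 2) * (yv x i * yv x j) ∈ mU x ^ 2 := fun i =>
      sum_mem fun j _ => Ideal.mul_mem_left _ _ (hyy i j)
    have : χ w = 0 := by
      rw [χcongr w hw2 _ (sum_mem fun i _ => mm i) (jet_of_mem_sq hw2), χsum _ _ fun i _ => mm i]
      apply Finset.sum_eq_zero
      intro i _
      rw [χsum _ _ fun j _ => Ideal.mul_mem_left _ _ (hyy i j)]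
      apply Finset.sum_eq_zero
      intro j _
      rw [χmul _ _ (hyy i j), z2, mul_zero]
    rw [χψ w hw2 hwJ, hψw] at this
    exact one_ne_zero this
  · have hxZ : x ∉ Z := by
      intro hxZ
      apply hwx
      rw [hwdef, map_sum]
      apply Finset.sum_eq_zero
      intro p hp
      rw [map_pow, mem_mU.1 (hJ0le x hxZ (hsJ p hp))]; simp
    have hGx := hpos x hx hxZ
    have hwx0 : 0 < eval x w := by
      have : 0 ≤ eval x w := hx w (h.mult_le hw)
      exact lt_of_le_of_ne this (Ne.symm hwx)
    have e1 : eval x w * ψ G = eval x G := by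
      rw [← hmul w G hGJ, mul_comm w G, hmul G w hwJ, hψw, mul_one]
    nlinarith

open MvPolynomial MeasureTheory

theorem bigO_mU {N : ℕ} (u : Fin N → ℝ) (p : RPoly N) :
    (fun x => eval x p - eval u p) =O[nhds u] (fun x => ‖x - u‖) := by
  induction p using MvPolynomial.induction_on with
  | C c => simpa using Asymptotics.isBigO_zero _ _
  | add p q hp hq =>
    have := hp.add hq
    refine this.congr_left fun x => ?_
    simp only [map_add]; ring
  | mul_X p k hp =>
    have h1 : (fun x : Fin N → ℝ => x k) =O[nhds u] (fun _ => (1 : ℝ)) :=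
      ((continuous_apply k).tendsto u).isBigO_one ℝ
    have h2 : (fun x : Fin N → ℝ => eval u p * (x k - u k)) =O[nhds u] (fun x => ‖x - u‖) := by
      apply Asymptotics.IsBigO.const_mul_left
      apply Asymptotics.isBigO_of_le
      intro x
      rw [norm_norm]
      exact norm_le_pi_norm (x - u) k
    have := (hp.mul h1).add (h2.congr_right fun x => (mul_one _).symm)
    refine (this.congr_right fun x => mul_one _).congr_left fun x => ?_
    simp only [map_mul, eval_X]; ring

theorem bigO_pow {N : ℕ} (u : Fin N → ℝ) (k : ℕ) (p : RPoly N) (hp : p ∈ mU u ^ k) :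
    (fun x => eval x p) =O[nhds u] (fun x => ‖x - u‖ ^ k) := by
  induction k generalizing p with
  | zero =>
    simp only [pow_zero]
    exact ((MvPolynomial.continuous_eval p).tendsto u).isBigO_one ℝ
  | succ k ih =>
    rw [pow_succ] at hp
    refine Submodule.mul_induction_on hp ?_ ?_
    · intro a ha b hb
      have h1 := bigO_mU u b
      rw [mem_mU.1 hb] at h1
      refine ((ih a ha).mul h1).congr (fun x => ?_) fun x => ?_
      · simp
      · ring
    · intro a b ha hb
      refine (ha.add hb).congr_left fun x => ?_
      simp

theorem norm_sq_le_sum {N : ℕ} (v : Fin N → ℝ) : ‖v‖ ^ 2 ≤ ∑ i, v i ^ 2 := by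
  have h0 : 0 ≤ ∑ i, v i ^ 2 := Finset.sum_nonneg fun i _ => sq_nonneg _
  have : ‖v‖ ≤ Real.sqrt (∑ i, v i ^ 2) := by
    rw [pi_norm_le_iff_of_nonneg (Real.sqrt_nonneg _)]
    intro i
    apply Real.le_sqrt_of_sq_le
    rw [Real.norm_eq_abs, sq_abs]
    exact Finset.single_le_sum (fun i _ => sq_nonneg (v i)) (Finset.mem_univ i)
  calc ‖v‖ ^ 2 ≤ Real.sqrt (∑ i, v i ^ 2) ^ 2 := by gcongr
    _ = _ := Real.sq_sqrt h0

theorem PosJet.eventually_pos {N : ℕ} {u : Fin N → ℝ} {P : RPoly N} (h : PosJet u P) :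
    ∀ᶠ x in nhds u, x ≠ u → 0 < eval x P := by
  obtain ⟨ε, hε, B, hB⟩ := h
  obtain ⟨c, hc, hb⟩ := (bigO_pow u 3 _ hB).exists_pos
  rw [Asymptotics.IsBigOWith] at hb
  have hn : ∀ᶠ x in nhds u, c * ‖x - u‖ < ε := by
    have : Filter.Tendsto (fun x : Fin N → ℝ => c * ‖x - u‖) (nhds u) (nhds (c * ‖u - u‖)) := by
      apply Continuous.tendsto; fun_prop
    apply this.eventually_lt_const
    simpa using hε
  filter_upwards [hb, hn] with x h1 h2 hx
  have h3 := neg_le_of_abs_le (by simpa using h1)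
  have hpos : 0 < ‖x - u‖ := norm_pos_iff.2 (sub_ne_zero.2 hx)
  have h4 := norm_sq_le_sum (x - u)
  have e1 : eval x (∑ i, C ε * yv u i ^ 2 + ∑ k, (∑ i, C (B k i) * yv u i) ^ 2) =
      ε * ∑ i, (x - u) i ^ 2 + ∑ k, (eval x (∑ i, C (B k i) * yv u i)) ^ 2 := by
    rw [map_add, map_sum, map_sum, Finset.mul_sum]
    simp [yv]
  have e2 : 0 ≤ ∑ k, (eval x (∑ i, C (B k i) * yv u i)) ^ 2 := Finset.sum_nonneg fun i _ => sq_nonneg _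
  have e3 : eval x P = eval x (P - (∑ i, C ε * yv u i ^ 2 + ∑ k, (∑ i, C (B k i) * yv u i) ^ 2))
     + eval x (∑ i, C ε * yv u i ^ 2 + ∑ k, (∑ i, C (B k i) * yv u i) ^ 2) := by
    rw [← map_add, sub_add_cancel]
  have h3' : -(c * ‖x - u‖ ^ 3) ≤ eval x (P - (∑ i, C ε * yv u i ^ 2 + ∑ k, (∑ i, C (B k i) * yv u i) ^ 2)) := by
    have := neg_abs_le (eval x (P - (∑ i, C ε * yv u i ^ 2 + ∑ k, (∑ i, C (B k i) * yv u i) ^ 2)))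
    rw [Real.norm_eq_abs, Real.norm_eq_abs, abs_of_nonneg (by positivity : 0 ≤ ‖x-u‖^3)] at h1
    linarith
  have h5 : c * ‖x - u‖ ^ 3 < ε * ‖x - u‖ ^ 2 := by
    have : 0 < ‖x - u‖ ^ 2 := by positivity
    nlinarith
  have h6 : ε * ‖x - u‖ ^ 2 ≤ ε * ∑ i, (x - u) i ^ 2 := by gcongr
  rw [e3, e1]
  linarith

theorem one_mul_aux {N : ℕ} {J : Ideal (RPoly N)} {a b : RPoly N} (ha : a - 1 ∈ J) (hb : b - 1 ∈ J) :
    a * b - 1 ∈ J := by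
  rw [show a * b - 1 = a * (b - 1) + (a - 1) by ring]
  exact add_mem (Ideal.mul_mem_left _ _ hb) ha

theorem one_pow_aux {N : ℕ} {J : Ideal (RPoly N)} {a : RPoly N} (ha : a - 1 ∈ J) (k : ℕ) :
    a ^ k - 1 ∈ J := by
  induction k with
  | zero => simp
  | succ k ih => rw [pow_succ]; exact one_mul_aux ih ha

theorem main_mem {N : ℕ} {M : AddSubmonoid (RPoly N)} (h : QMod M) (F : RPoly N)
    (hF : ∀ x, (∀ m ∈ M, 0 ≤ eval x m) → 0 ≤ eval x F)
    (hZ : ∀ u, (∀ m ∈ M, 0 ≤ eval u m) → eval u F = 0 → ∃ s ∈ M, PosJet u (F - s)) :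
    F ∈ M := by
  classical
  set K : Set (Fin N → ℝ) := {x | ∀ m ∈ M, 0 ≤ eval x m} with hKdef
  have hKc : IsClosed K := by
    have : K = ⋂ m ∈ M, {x | 0 ≤ eval x m} := by ext x; simp [hKdef]
    rw [this]
    exact isClosed_biInter fun m _ => isClosed_le continuous_const (MvPolynomial.continuous_eval m)
  have hsph : ∀ x ∈ K, ∑ i, x i ^ 2 = 1 := by
    intro x hx
    have h1 := hx _ (h.sph 1)
    have h2 := hx _ (h.sph (-1))
    simp at h1 h2
    linarith
  have hKcomp : IsCompact K := by
    apply Metric.isCompact_of_isClosed_isBounded hKc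
    refine (Metric.isBounded_closedBall (x := (0 : Fin N → ℝ)) (r := 1)).subset ?_
    intro x hx
    rw [mem_closedBall_zero_iff]
    have h1 := norm_sq_le_sum x
    rw [hsph x hx] at h1
    nlinarith [norm_nonneg x]
  have hs : ∀ u, ∃ s, (u ∈ K → eval u F = 0 → s ∈ M ∧ PosJet u (F - s)) := by
    intro u
    by_cases hu : u ∈ K ∧ eval u F = 0
    · obtain ⟨s, h1, h2⟩ := hZ u hu.1 hu.2
      exact ⟨s, fun _ _ => ⟨h1, h2⟩⟩
    · exact ⟨0, fun h1 h2 => absurd ⟨h1, h2⟩ hu⟩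
  choose s hs using hs
  set Zs : Set (Fin N → ℝ) := {u | u ∈ K ∧ eval u F = 0} with hZs
  have hZcomp : IsCompact Zs := by
    apply hKcomp.of_isClosed_subset _ fun u hu => hu.1
    exact hKc.inter (isClosed_eq (MvPolynomial.continuous_eval F) continuous_const)
  have hiso : ∀ u ∈ Zs, {x | x ∈ Zs → x = u} ∈ nhds u := by
    intro u hu
    obtain ⟨h1, h2⟩ := hs u hu.1 hu.2
    filter_upwards [h2.eventually_pos] with x hx hxZ
    by_contra hne
    have h3 := hx hne
    have h4 := hxZ.1 _ h1
    rw [map_sub, hxZ.2] at h3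
    linarith
  obtain ⟨t, ht1, ht2⟩ := hZcomp.elim_nhds_subcover _ hiso
  have hZt : ∀ x, x ∈ Zs ↔ x ∈ t := by
    intro x
    constructor
    · intro hx
      obtain ⟨u, hu, hxu⟩ := Set.mem_iUnion₂.1 (ht2 hx)
      rw [hxu hx]; exact hu
    · exact ht1 x
  have hsM : ∀ u ∈ t, s u ∈ M := fun u hu => (hs u (ht1 u hu).1 (ht1 u hu).2).1
  have hsJ : ∀ u ∈ t, PosJet u (F - s u) := fun u hu => (hs u (ht1 u hu).1 (ht1 u hu).2).2
  have hs0 : ∀ u ∈ t, s u ∈ mU u := by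
    intro u hu
    have := (mem_sq_grad (hsJ u hu).mem_sq).1
    rw [map_sub, (ht1 u hu).2] at this
    rw [mem_mU]; linarith
  choose e he1 he2 using fun u => exists_sep t u
  set b : RPoly N := 1 - ∏ u ∈ t, C (1/4) * ∑ i, yv u i ^ 2 with hb
  have hb1 : ∀ u ∈ t, b - 1 ∈ mU u ^ 2 := by
    intro u hu
    rw [hb, ← Finset.mul_prod_erase t _ hu]
    rw [sub_sub_cancel_left]
    refine neg_mem (Ideal.mul_mem_right _ _ (Ideal.mul_mem_left _ _ (sum_mem fun i _ => ?_)))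
    exact Ideal.pow_mem_pow (yv_mem u i) 2
  have hfac : ∀ u ∈ t, ∀ x ∈ K, eval x (C (1/4) * ∑ i, yv u i ^ 2 : RPoly N) =
      1/4 * ∑ i, (x i - u i) ^ 2 := by
    intro u _ x _; simp [yv]
  have hfac0 : ∀ u ∈ t, ∀ x ∈ K, 0 ≤ eval x (C (1/4) * ∑ i, yv u i ^ 2 : RPoly N) := by
    intro u hu x hx
    rw [hfac u hu x hx]
    exact mul_nonneg (by norm_num) (Finset.sum_nonneg fun i _ => sq_nonneg _)
  have hfac1 : ∀ u ∈ t, ∀ x ∈ K, eval x (C (1/4) * ∑ i, yv u i ^ 2 : RPoly N) ≤ 1 := by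
    intro u hu x hx
    rw [hfac u hu x hx]
    have : ∑ i, (x i - u i) ^ 2 ≤ ∑ i, (2 * x i ^ 2 + 2 * u i ^ 2) :=
      Finset.sum_le_sum fun i _ => by nlinarith [sq_nonneg (x i + u i)]
    rw [Finset.sum_add_distrib, ← Finset.mul_sum, ← Finset.mul_sum, hsph x hx,
      hsph u (ht1 u hu).1] at this
    linarith
  have hbnn : ∀ x ∈ K, 0 ≤ eval x b := by
    intro x hx
    have := Finset.prod_le_one (hfac0 · · x hx) (hfac1 · · x hx)
    rw [hb, map_sub, map_one, map_prod]
    linarith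
  have hble : ∀ x ∈ K, eval x b ≤ 1 := by
    intro x hx
    have := Finset.prod_nonneg (hfac0 · · x hx)
    rw [hb, map_sub, map_one, map_prod]
    linarith
  have hblt : ∀ x ∈ K, x ∉ t → eval x b < 1 := by
    intro x hx hxt
    have : 0 < ∏ u ∈ t, eval x (C (1/4) * ∑ i, yv u i ^ 2 : RPoly N) := by
      apply Finset.prod_pos
      intro u hu
      apply lt_of_le_of_ne (hfac0 u hu x hx)
      rw [hfac u hu x hx]
      intro h0
      have h1 : ∑ i, (x i - u i) ^ 2 = 0 := by linarith
      apply hxt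
      have : x = u := by
        funext i
        have := (Finset.sum_eq_zero_iff_of_nonneg (fun i _ => sq_nonneg (x i - u i))).1 h1 i (Finset.mem_univ i)
        have := pow_eq_zero_iff (two_ne_zero) |>.1 this
        linarith
      exact this ▸ hu
    rw [hb, map_sub, map_one, map_prod]
    linarith
  set S : RPoly N := ∑ u ∈ t, e u ^ 2 * s u with hS
  have hSM : ∀ k : ℕ, (b ^ k) ^ 2 * S ∈ M := by
    intro k
    apply h.sq
    exact sum_mem fun u hu => h.sq _ _ (hsM u hu)
  have hS0 : ∀ x ∈ K, 0 ≤ eval x S := by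
    intro x hx
    have := hx _ (hSM 0)
    simpa using this
  set G : ℕ → RPoly N := fun k => F - (b ^ k) ^ 2 * S with hG
  have hGe : ∀ k x, eval x (G k) = eval x F - (eval x b ^ k) ^ 2 * eval x S := by
    intro k x; simp [hG]
  have hGJ : ∀ k, ∀ u ∈ t, PosJet u (G k) := by
    intro k u hu
    apply (hsJ u hu).congr
    have : G k - (F - s u) = -(((b ^ k) ^ 2 * e u ^ 2 - 1) * s u)
        - (b ^ k) ^ 2 * ∑ v ∈ t.erase u, e v ^ 2 * s v := by
      simp only [hG, hS]
      rw [← Finset.add_sum_erase t _ hu]; ring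
    rw [this]
    apply sub_mem
    · apply neg_mem
      rw [pow_succ]
      apply Ideal.mul_mem_mul _ (hs0 u hu)
      exact one_mul_aux (one_pow_aux (one_pow_aux (hb1 u hu) k) 2) (one_pow_aux (he1 u) 2)
    · refine Ideal.mul_mem_left _ _ (sum_mem fun v hv => Ideal.mul_mem_right _ _ ?_)
      have h2 := he2 v u hu (Finset.ne_of_mem_erase hv).symm
      have h3 := Ideal.pow_mem_pow h2 2
      rw [← pow_mul] at h3
      exact Ideal.pow_le_pow_right (by norm_num) h3
  have hmono : ∀ x ∈ K, ∀ k l, k ≤ l → eval x (G k) ≤ eval x (G l) := by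
    intro x hx k l hkl
    rw [hGe, hGe]
    have h1 := pow_le_pow_of_le_one (hbnn x hx) (hble x hx) hkl
    have h2 : 0 ≤ eval x b ^ l := pow_nonneg (hbnn x hx) _
    have h3 : (eval x b ^ l) ^ 2 ≤ (eval x b ^ k) ^ 2 := by gcongr
    have := mul_le_mul_of_nonneg_right h3 (hS0 x hx)
    linarith
  have hO : ∀ u, ∃ O : Set (Fin N → ℝ), IsOpen O ∧ (u ∈ t → u ∈ O) ∧ (u ∈ t → ∀ x ∈ O, x ≠ u → 0 < eval x (G 0)) := by
    intro u
    by_cases hu : u ∈ t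
    · obtain ⟨O, h1, h2, h3⟩ := mem_nhds_iff.1 (hGJ 0 u hu).eventually_pos
      exact ⟨O, h2, fun _ => h3, fun _ x hx => h1 hx⟩
    · exact ⟨Set.univ, isOpen_univ, fun h => absurd h hu, fun h => absurd h hu⟩
  choose O hO1 hO2 hO3 using hO
  set A : Set (Fin N → ℝ) := K \ ⋃ u ∈ t, O u with hA
  have hAc : IsCompact A := hKcomp.diff (isOpen_biUnion fun u _ => hO1 u)
  have hcov : A ⊆ ⋃ k, {x | 0 < eval x (G k)} := by
    intro x hx
    have hxt : x ∉ t := fun hxt => hx.2 (Set.mem_iUnion₂.2 ⟨x, hxt, hO2 x hxt⟩)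
    have hFx : 0 < eval x F := by
      apply lt_of_le_of_ne (hF x hx.1)
      intro h0
      exact hxt ((hZt x).1 ⟨hx.1, h0.symm⟩)
    have hlim : Filter.Tendsto (fun k : ℕ => (eval x b ^ k) ^ 2 * eval x S) Filter.atTop (nhds 0) := by
      have := ((tendsto_pow_atTop_nhds_zero_of_lt_one (hbnn x hx.1) (hblt x hx.1 hxt)).pow 2).mul_const (eval x S)
      simpa using this
    obtain ⟨k, hk⟩ := (hlim.eventually_lt_const hFx).exists
    refine Set.mem_iUnion.2 ⟨k, ?_⟩
    change 0 < eval x (G k)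
    rw [hGe]; linarith
  obtain ⟨T, hT⟩ := hAc.elim_finite_subcover _
    (fun k => isOpen_lt continuous_const (MvPolynomial.continuous_eval (G k))) hcov
  set k := T.sup id with hk
  have hGk : G k ∈ M := by
    apply posjet_mem h t (G k) (hGJ k)
    intro x hx hxt
    by_cases hxO : x ∈ ⋃ u ∈ t, O u
    · obtain ⟨u, hu, hxu⟩ := Set.mem_iUnion₂.1 hxO
      have h1 := hO3 u hu x hxu (by rintro rfl; exact hxt hu)
      exact lt_of_lt_of_le h1 (hmono x hx 0 k (Nat.zero_le _))
    · obtain ⟨l, hl, hxl⟩ := Set.mem_iUnion₂.1 (hT ⟨hx, hxO⟩)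
      exact lt_of_lt_of_le hxl (hmono x hx l k (Finset.le_sup (f := id) hl))
  have := add_mem hGk (hSM k)
  simpa [hG] using this

open MvPolynomial MeasureTheory

theorem compact_penalty {X : Type*} [TopologicalSpace X] {S : Set X} (hS : IsCompact S)
    (A B : X → ℝ) (hA : Continuous A) (hB : Continuous B) (hB0 : ∀ x ∈ S, 0 ≤ B x)
    (h : ∀ x ∈ S, B x = 0 → 0 < A x) : ∃ t : ℝ, 0 < t ∧ ∀ x ∈ S, 0 < A x + t * B x := by
  have hcov : S ⊆ ⋃ k : ℕ, {x | 0 < A x + k * B x} := by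
    intro x hx
    rw [Set.mem_iUnion]
    rcases (hB0 x hx).eq_or_lt with h0 | h0
    · exact ⟨0, by simpa using h x hx h0.symm⟩
    · obtain ⟨k, hk⟩ := exists_nat_gt (-A x / B x)
      refine ⟨k, ?_⟩
      rw [div_lt_iff₀ h0] at hk
      change 0 < A x + k * B x
      linarith
  obtain ⟨T, hT⟩ := hS.elim_finite_subcover _
    (fun k : ℕ => isOpen_lt continuous_const (by fun_prop : Continuous fun x => A x + k * B x)) hcov
  refine ⟨(T.sup id : ℕ) + 1, by positivity, fun x hx => ?_⟩
  obtain ⟨l, hl, hxl⟩ := Set.mem_iUnion₂.1 (hT hx)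
  have h1 : (l : ℝ) ≤ ((T.sup id : ℕ) : ℝ) := by exact_mod_cast Finset.le_sup (f := id) hl
  have h2 : 0 < A x + l * B x := hxl
  nlinarith [hB0 x hx]

theorem hess_symm {N : ℕ} (p : RPoly N) (u : Fin N → ℝ) (i j : Fin N) :
    hessP p u i j = hessP p u j i := by
  unfold hessP
  congr 1
  have : ⁅(pderiv i : Derivation ℝ (RPoly N) (RPoly N)), pderiv j⁆ = (0 : Derivation ℝ (RPoly N) (RPoly N)) := by
    apply MvPolynomial.derivation_ext
    intro k
    rw [Derivation.commutator_apply]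
    simp only [pderiv_X, Pi.single_apply]
    split_ifs <;> simp
  have h2 := congrArg (fun D => D p) this
  simp only [Derivation.commutator_apply] at h2
  exact sub_eq_zero.1 (by simpa using h2)

theorem psd_factor {N : ℕ} (H : Matrix (Fin N) (Fin N) ℝ) (hpsd : H.PosSemidef) :
    ∃ B : Matrix (Fin N) (Fin N) ℝ, H = B.conjTranspose * B := by
  open scoped MatrixOrder in
  exact CStarAlgebra.nonneg_iff_eq_star_mul_self.mp hpsd.nonneg

theorem posjet_of_hess {N : ℕ} {u : Fin N → ℝ} {P : RPoly N} (h0 : eval u P = 0)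
    (h1 : ∀ i, gradP P u i = 0)
    (h2 : ∀ v : Fin N → ℝ, v ≠ 0 → 0 < ∑ i, ∑ j, v i * hessP P u i j * v j) : PosJet u P := by
  set q : (Fin N → ℝ) → ℝ := fun v => ∑ i, ∑ j, v i * hessP P u i j * v j with hq
  have hqc : Continuous q := by fun_prop
  obtain ⟨t, ht, hpos⟩ := compact_penalty (isCompact_sphere (0 : Fin N → ℝ) 1)
    (fun v => - ∑ i, v i ^ 2) q (by fun_prop) hqc
    (fun v hv => (h2 v (by rintro rfl; simp at hv)).le)
    (fun v hv h => absurd h (h2 v (by rintro rfl; simp at hv)).ne')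
  have hall : ∀ v : Fin N → ℝ, ∑ i, v i ^ 2 ≤ t * q v := by
    intro v
    by_cases hv : v = 0
    · subst hv; simp [hq]
    · have hn : 0 < ‖v‖ := norm_pos_iff.2 hv
      have := hpos (‖v‖⁻¹ • v) (by simp [norm_smul, hn.ne'])
      have e1 : q (‖v‖⁻¹ • v) = ‖v‖⁻¹ ^ 2 * q v := by
        simp only [hq, Finset.mul_sum, Pi.smul_apply, smul_eq_mul]
        exact Finset.sum_congr rfl fun i _ => Finset.sum_congr rfl fun j _ => by ring
      have e2 : ∑ i, (‖v‖⁻¹ • v) i ^ 2 = ‖v‖⁻¹ ^ 2 * ∑ i, v i ^ 2 := by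
        simp only [Finset.mul_sum, Pi.smul_apply, smul_eq_mul]
        exact Finset.sum_congr rfl fun i _ => by ring
      rw [e1, e2] at this
      have hp : 0 < ‖v‖⁻¹ ^ 2 := by positivity
      have h3 : 0 < ‖v‖⁻¹ ^ 2 * (t * q v - ∑ i, v i ^ 2) := by linarith
      have := pos_of_mul_pos_right h3 hp.le
      linarith
  set ε : ℝ := 1 / (2 * t) with hε
  have hεp : 0 < ε := by positivity
  set H : Matrix (Fin N) (Fin N) ℝ := Matrix.of fun i j => hessP P u i j / 2 - (if i = j then ε else 0) with hH
  have hform : ∀ v : Fin N → ℝ, dotProduct v (H.mulVec v) = q v / 2 - ε * ∑ i, v i ^ 2 := by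
    intro v
    simp only [dotProduct, Matrix.mulVec, hH, Matrix.of_apply, hq, Finset.mul_sum, Finset.sum_div, sub_mul,
      mul_sub, Finset.sum_sub_distrib, ite_mul, zero_mul, mul_ite, mul_zero, Finset.sum_ite_eq,
      Finset.mem_univ, if_true]
    congr 1
    · exact Finset.sum_congr rfl fun i _ => Finset.sum_congr rfl fun j _ => by ring
    · exact Finset.sum_congr rfl fun i _ => by ring
  have hpsd : H.PosSemidef := by
    apply Matrix.PosSemidef.of_dotProduct_mulVec_nonneg
    · ext i j
      simp only [Matrix.conjTranspose_apply, hH, Matrix.of_apply, star_trivial]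
      rw [hess_symm P u j i]
      simp only [eq_comm]
    · intro v
      rw [star_trivial, hform]
      have := hall v
      have e : ε * ∑ i, v i ^ 2 ≤ ε * (t * q v) := by gcongr
      have e' : ε * (t * q v) = q v / 2 := by rw [hε]; field_simp
      linarith
  obtain ⟨B, hB⟩ := psd_factor H hpsd
  refine ⟨ε, hεp, B, ?_⟩
  have ht := taylor u P
  simp only [h0, h1, map_zero, zero_mul, Finset.sum_const_zero, zero_add] at ht
  convert ht using 2
  have hBij : ∀ i j, hessP P u i j / 2 = (if i = j then ε else 0) + ∑ k, B k i * B k j := by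
    intro i j
    have := congrFun (congrFun hB i) j
    simp only [hH, Matrix.of_apply, Matrix.mul_apply, Matrix.conjTranspose_apply, star_trivial] at this
    linarith
  simp only [hBij, map_add, map_sum, add_mul, Finset.sum_add_distrib]
  congr 1
  · refine Finset.sum_congr rfl fun i _ => ?_
    simp [apply_ite C, ite_mul, pow_two]
  · have hk : ∀ k, (∑ i, C (B k i) * yv u i) ^ 2
        = ∑ i, ∑ j, C (B k i * B k j) * (yv u i * yv u j) := by
      intro k
      rw [pow_two, Finset.sum_mul_sum]
      refine Finset.sum_congr rfl fun i _ => Finset.sum_congr rfl fun j _ => ?_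
      rw [C_mul]; ring
    simp only [hk, Finset.sum_mul]
    rw [Finset.sum_comm]
    refine Finset.sum_congr rfl fun i _ => ?_
    rw [Finset.sum_comm]

open MvPolynomial MeasureTheory

theorem hess_add {N : ℕ} (p q : RPoly N) (u : Fin N → ℝ) (i j : Fin N) :
    hessP (p + q) u i j = hessP p u i j + hessP q u i j := by simp [hessP]
theorem hess_sub {N : ℕ} (p q : RPoly N) (u : Fin N → ℝ) (i j : Fin N) :
    hessP (p - q) u i j = hessP p u i j - hessP q u i j := by simp [hessP]
theorem hess_Cmul {N : ℕ} (c : ℝ) (p : RPoly N) (u : Fin N → ℝ) (i j : Fin N) :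
    hessP (C c * p) u i j = c * hessP p u i j := by simp [hessP, pderiv_C_mul]
theorem hess_sum {N : ℕ} {ι : Type} (S : Finset ι) (p : ι → RPoly N) (u : Fin N → ℝ) (i j : Fin N) :
    hessP (∑ o ∈ S, p o) u i j = ∑ o ∈ S, hessP (p o) u i j := by simp [hessP]
theorem hess_sq {N : ℕ} (p : RPoly N) (u : Fin N → ℝ) (i j : Fin N) (h : eval u p = 0) :
    hessP (p ^ 2) u i j = 2 * (gradP p u i * gradP p u j) := by
  simp [hessP, gradP, pow_two, Derivation.leibniz, h]; ring
theorem grad_add {N : ℕ} (p q : RPoly N) (u : Fin N → ℝ) (i : Fin N) :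
    gradP (p + q) u i = gradP p u i + gradP q u i := by simp [gradP]
theorem grad_sub {N : ℕ} (p q : RPoly N) (u : Fin N → ℝ) (i : Fin N) :
    gradP (p - q) u i = gradP p u i - gradP q u i := by simp [gradP]
theorem grad_Cmul {N : ℕ} (c : ℝ) (p : RPoly N) (u : Fin N → ℝ) (i : Fin N) :
    gradP (C c * p) u i = c * gradP p u i := by simp [gradP, pderiv_C_mul]
theorem grad_sum {N : ℕ} {ι : Type} (S : Finset ι) (p : ι → RPoly N) (u : Fin N → ℝ) (i : Fin N) :
    gradP (∑ o ∈ S, p o) u i = ∑ o ∈ S, gradP (p o) u i := by simp [gradP]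
theorem grad_sq {N : ℕ} (p : RPoly N) (u : Fin N → ℝ) (i : Fin N) (h : eval u p = 0) :
    gradP (p ^ 2) u i = 0 := by
  simp [gradP, pow_two, Derivation.leibniz, h]

theorem quad_sq {N : ℕ} {ι : Type} (S : Finset ι) (g : ι → Fin N → ℝ) (v : Fin N → ℝ) :
    ∑ i, ∑ j, v i * (∑ o ∈ S, g o i * g o j) * v j = ∑ o ∈ S, (∑ i, v i * g o i) ^ 2 := by
  simp only [Finset.mul_sum, Finset.sum_mul, pow_two]
  rw [Finset.sum_congr rfl fun i _ => Finset.sum_comm, Finset.sum_comm]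
  refine Finset.sum_congr rfl fun o _ => ?_
  rw [Finset.sum_comm]
  refine Finset.sum_congr rfl fun i _ => Finset.sum_congr rfl fun j _ => by ring

theorem local_cert {N : ℕ} {ι κ : Type} {Es : Finset ι} {ge : ι → RPoly N} {Is : Finset κ}
    {gi : κ → RPoly N} {F : RPoly N} {u : Fin N → ℝ} (hO : OptCondsAt Es ge Is gi F u)
    (hF0 : eval u F = 0) (hge : ∀ o ∈ Es, eval u (ge o) = 0)
    (W : ι → RPoly N) (W' : κ → RPoly N) (hW : ∀ o ∈ Es, W o - 1 ∈ mU u ^ 2)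
    (hW' : ∀ o ∈ Is, eval u (gi o) = 0 → W' o - 1 ∈ mU u ^ 2) :
    ∃ (a : ι → RPoly N) (b : κ → RPoly N), (∀ o ∈ Is, eval u (gi o) ≠ 0 → b o = 0) ∧
      PosJet u (F - (∑ o ∈ Es, ge o * W o * a o + ∑ o ∈ Is, gi o * W' o * b o ^ 2)) := by
  classical
  obtain ⟨-, lE, lI, hK, hcomp, hscc, hsosc⟩ := hO
  set A : Finset κ := Is.filter fun o => eval u (gi o) = 0 with hA
  have hAm : ∀ o, o ∈ A ↔ o ∈ Is ∧ eval u (gi o) = 0 := fun o => Finset.mem_filter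
  set L : Fin N → Fin N → ℝ := fun i i' => (hessP F u i i' - ∑ j ∈ Es, lE j * hessP (ge j) u i i')
          - ∑ j ∈ Is, lI j * hessP (gi j) u i i' with hL
  set qL : (Fin N → ℝ) → ℝ := fun v => ∑ i, ∑ i', v i * L i i' * v i' with hqL
  set qW : (Fin N → ℝ) → ℝ := fun v => ∑ o ∈ Es, (∑ i, v i * gradP (ge o) u i) ^ 2
    + ∑ o ∈ A, (∑ i, v i * gradP (gi o) u i) ^ 2 with hqW
  have n1 : ∀ v : Fin N → ℝ, 0 ≤ ∑ o ∈ Es, (∑ i, v i * gradP (ge o) u i) ^ 2 :=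
    fun v => Finset.sum_nonneg fun _ _ => sq_nonneg _
  have n2 : ∀ v : Fin N → ℝ, 0 ≤ ∑ o ∈ A, (∑ i, v i * gradP (gi o) u i) ^ 2 :=
    fun v => Finset.sum_nonneg fun _ _ => sq_nonneg _
  obtain ⟨t, ht, hpos⟩ := compact_penalty (isCompact_sphere (0 : Fin N → ℝ) 1)
    qL qW (by fun_prop) (by fun_prop)
    (fun v hv => add_nonneg (n1 v) (n2 v))
    (by
      intro v hv h0
      have z1 : ∑ o ∈ Es, (∑ i, v i * gradP (ge o) u i) ^ 2 = 0 := by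
        have := n1 v; have := n2 v; simp only [hqW] at h0; linarith
      have z2 : ∑ o ∈ A, (∑ i, v i * gradP (gi o) u i) ^ 2 = 0 := by
        have := n1 v; have := n2 v; simp only [hqW] at h0; linarith
      apply hsosc v (by rintro rfl; simp at hv)
      · intro j hj
        exact pow_eq_zero_iff (two_ne_zero) |>.1
          ((Finset.sum_eq_zero_iff_of_nonneg fun _ _ => sq_nonneg _).1 z1 j hj)
      · intro j hj hj0
        exact pow_eq_zero_iff (two_ne_zero) |>.1
          ((Finset.sum_eq_zero_iff_of_nonneg fun _ _ => sq_nonneg _).1 z2 j ((hAm j).2 ⟨hj, hj0⟩)))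
  have hall : ∀ v : Fin N → ℝ, v ≠ 0 → 0 < qL v + t * qW v := by
    intro v hv
    have hn : 0 < ‖v‖ := norm_pos_iff.2 hv
    have := hpos (‖v‖⁻¹ • v) (by simp [norm_smul, hn.ne'])
    have e1 : qL (‖v‖⁻¹ • v) = ‖v‖⁻¹ ^ 2 * qL v := by
      simp only [hqL, Finset.mul_sum, Pi.smul_apply, smul_eq_mul]
      exact Finset.sum_congr rfl fun i _ => Finset.sum_congr rfl fun j _ => by ring
    have e2 : qW (‖v‖⁻¹ • v) = ‖v‖⁻¹ ^ 2 * qW v := by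
      simp only [hqW, mul_add, Finset.mul_sum, Pi.smul_apply, smul_eq_mul, mul_assoc]
      simp only [← Finset.mul_sum, mul_pow]
    rw [e1, e2] at this
    have h3 : 0 < ‖v‖⁻¹ ^ 2 * (qL v + t * qW v) := by linarith
    exact pos_of_mul_pos_right h3 (by positivity)
  set P : RPoly N := F - ∑ o ∈ Es, C (lE o) * ge o - ∑ o ∈ Is, C (lI o) * gi o
    + C (t / 2) * (∑ o ∈ Es, ge o ^ 2 + ∑ o ∈ A, gi o ^ 2) with hP
  have hPJ : PosJet u P := by
    apply posjet_of_hess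
    · simp only [hP, map_add, map_sub, map_sum, map_mul, eval_C, map_pow, hF0]
      have z1 : ∑ o ∈ Es, lE o * eval u (ge o) = 0 :=
        Finset.sum_eq_zero fun o ho => by rw [hge o ho, mul_zero]
      have z2 : ∑ o ∈ Is, lI o * eval u (gi o) = 0 :=
        Finset.sum_eq_zero fun o ho => (hcomp o ho).2
      have z3 : ∑ o ∈ Es, eval u (ge o) ^ 2 = 0 :=
        Finset.sum_eq_zero fun o ho => by rw [hge o ho]; simp
      have z4 : ∑ o ∈ A, eval u (gi o) ^ 2 = 0 :=
        Finset.sum_eq_zero fun o ho => by rw [((hAm o).1 ho).2]; simp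
      rw [z1, z2, z3, z4]; simp
    · intro i
      have hi := congrFun hK i
      simp only [Pi.add_apply, Finset.sum_apply, Pi.smul_apply, smul_eq_mul] at hi
      simp only [hP, grad_add, grad_sub, grad_sum, grad_Cmul, hi]
      have z3 : ∑ o ∈ Es, gradP (ge o ^ 2) u i = 0 :=
        Finset.sum_eq_zero fun o ho => grad_sq _ _ _ (hge o ho)
      have z4 : ∑ o ∈ A, gradP (gi o ^ 2) u i = 0 :=
        Finset.sum_eq_zero fun o ho => grad_sq _ _ _ ((hAm o).1 ho).2
      rw [z3, z4]; ring
    · intro v hv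
      have hh : ∀ i j, hessP P u i j = L i j + t * ((∑ o ∈ Es, gradP (ge o) u i * gradP (ge o) u j)
          + ∑ o ∈ A, gradP (gi o) u i * gradP (gi o) u j) := by
        intro i j
        simp only [hP, hess_add, hess_sub, hess_sum, hess_Cmul]
        have z3 : ∑ o ∈ Es, hessP (ge o ^ 2) u i j = 2 * ∑ o ∈ Es, gradP (ge o) u i * gradP (ge o) u j := by
          rw [Finset.mul_sum]
          exact Finset.sum_congr rfl fun o ho => hess_sq _ _ _ _ (hge o ho)
        have z4 : ∑ o ∈ A, hessP (gi o ^ 2) u i j = 2 * ∑ o ∈ A, gradP (gi o) u i * gradP (gi o) u j := by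
          rw [Finset.mul_sum]
          exact Finset.sum_congr rfl fun o ho => hess_sq _ _ _ _ ((hAm o).1 ho).2
        rw [z3, z4]; ring
      have : ∑ i, ∑ j, v i * hessP P u i j * v j = qL v + t * qW v := by
        have hs : ∀ g : Fin N → Fin N → ℝ, t * ∑ i, ∑ j, v i * g i j * v j =
            ∑ i, ∑ j, v i * (t * g i j) * v j := by
          intro g
          rw [Finset.mul_sum]
          refine Finset.sum_congr rfl fun i _ => ?_
          rw [Finset.mul_sum]
          exact Finset.sum_congr rfl fun j _ => by ring
        simp only [hh, hqW, ← quad_sq, hqL, mul_add, add_mul, Finset.sum_add_distrib, hs]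
      rw [this]; exact hall v hv
  refine ⟨fun o => C (lE o) - C (t / 2) * ge o,
    fun o => if eval u (gi o) = 0 then C (Real.sqrt (lI o)) - C (t / 2 / (2 * Real.sqrt (lI o))) * gi o else 0,
    fun o _ h => if_neg h, hPJ.congr ?_⟩
  have hAsum : ∑ o ∈ A, gi o ^ 2 = ∑ o ∈ Is, if eval u (gi o) = 0 then gi o ^ 2 else 0 :=
    Finset.sum_filter _ _
  have hdiff : ∀ (S : Finset ι) (T : Finset κ) (x y z : ι → RPoly N) (p q r : κ → RPoly N) (cc : RPoly N),
      (F - (∑ o ∈ S, x o + ∑ o ∈ T, p o)) -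
      (F - ∑ o ∈ S, y o - ∑ o ∈ T, q o + cc * (∑ o ∈ S, z o + ∑ o ∈ T, r o)) =
      -(∑ o ∈ S, (x o - y o + cc * z o) + ∑ o ∈ T, (p o - q o + cc * r o)) := by
    intro S T x y z p q r cc
    simp only [Finset.sum_add_distrib, Finset.sum_sub_distrib, ← Finset.mul_sum]
    ring
  rw [hP, hAsum, hdiff]
  refine neg_mem (add_mem (sum_mem fun o ho => ?_) (sum_mem fun o ho => ?_))
  · have : ge o * W o * (C (lE o) - C (t / 2) * ge o) - C (lE o) * ge o + C (t / 2) * ge o ^ 2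
        = (C (lE o) - C (t / 2) * ge o) * ((W o - 1) * ge o) := by ring
    rw [this, pow_succ]
    exact Ideal.mul_mem_left _ _ (Ideal.mul_mem_mul (hW o ho) (mem_mU.2 (hge o ho)))
  · by_cases h0 : eval u (gi o) = 0
    · simp only [h0, if_true]
      have hl : 0 < lI o := by have := hscc o ho; rw [h0] at this; linarith
      set r := Real.sqrt (lI o) with hr
      have hrp : 0 < r := Real.sqrt_pos.2 hl
      have e1 : (C (lI o) : RPoly N) = C r * C r := by
        rw [← C_mul, hr, Real.mul_self_sqrt hl.le]
      set cc := t / 2 / (2 * r) with hcc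
      have e2 : (C (t / 2) : RPoly N) = 2 * C r * C cc := by
        rw [show (2 : RPoly N) = C 2 from rfl, ← C_mul, ← C_mul, hcc]
        congr 1; field_simp
      rw [e1, e2]
      have : gi o * W' o * (C r - C cc * gi o) ^ 2 - C r * C r * gi o + 2 * C r * C cc * gi o ^ 2
        = (C r - C cc * gi o) ^ 2 * ((W' o - 1) * gi o) + C cc ^ 2 * gi o ^ 3 := by ring
      rw [this]
      refine add_mem (Ideal.mul_mem_left _ _ ?_) (Ideal.mul_mem_left _ _ ?_)
      · rw [pow_succ]; exact Ideal.mul_mem_mul (hW' o ho h0) (mem_mU.2 h0)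
      · exact Ideal.pow_mem_pow (mem_mU.2 h0) 3
    · have hl : lI o = 0 := by
        rcases mul_eq_zero.1 (hcomp o ho).2 with h | h
        · exact h
        · exact absurd h h0
      simp [h0, hl]

open MvPolynomial MeasureTheory

theorem eval_homogAux {n : ℕ} (l : ℕ) (p : RPoly n) (y : Fin (n + 1) → ℝ) :
    eval y (homogAux l p) =
      ∑ α ∈ p.support, p.coeff α * (y 0 ^ (l - mdeg α) * ∏ i, y (Fin.succ i) ^ α i) := by
  unfold homogAux
  rw [map_sum]
  refine Finset.sum_congr rfl fun α _ => ?_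
  rw [eval_monomial, Finsupp.prod_add_index' (by simp) (by intros; rw [pow_add]),
    Finsupp.prod_single_index (by simp), Finsupp.prod_mapDomain_index (by simp) (by intros; rw [pow_add]),
    Finsupp.prod_fintype _ _ (by simp)]

theorem mdeg_le {n : ℕ} {p : RPoly n} {α : Fin n →₀ ℕ} (h : α ∈ p.support) : mdeg α ≤ p.totalDegree := by
  have := le_totalDegree h
  rwa [Finsupp.sum_fintype _ _ (by simp)] at this

theorem eval_homog_smul {n : ℕ} (p : RPoly n) (y : Fin (n + 1) → ℝ) (t : ℝ) :
    eval (t • y) (homogenize p) = t ^ p.totalDegree * eval y (homogenize p) := by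
  unfold homogenize
  rw [eval_homogAux, eval_homogAux, Finset.mul_sum]
  refine Finset.sum_congr rfl fun α hα => ?_
  simp only [Pi.smul_apply, smul_eq_mul, mul_pow, Finset.prod_mul_distrib, Finset.prod_pow_eq_pow_sum]
  have h := mdeg_le hα
  have e : t ^ p.totalDegree = t ^ (p.totalDegree - mdeg α) * t ^ mdeg α := by
    rw [← pow_add, Nat.sub_add_cancel h]
  rw [e, mdeg]; ring

theorem eval_homog_one {n : ℕ} (p : RPoly n) (x : Fin n → ℝ) :
    eval (Fin.cons 1 x : Fin (n + 1) → ℝ) (homogenize p) = eval x p := by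
  unfold homogenize
  rw [eval_homogAux, eval_eq']
  refine Finset.sum_congr rfl fun α hα => ?_
  simp

theorem eval_homog_zero {n : ℕ} (p : RPoly n) (y : Fin (n + 1) → ℝ) (hy : y 0 = 0) :
    eval y (homogenize p) = eval (fun i => y (Fin.succ i)) (homogeneousComponent p.totalDegree p) := by
  unfold homogenize
  rw [eval_homogAux, homogeneousComponent_apply, map_sum, Finset.sum_filter]
  refine Finset.sum_congr rfl fun α hα => ?_
  have h := mdeg_le hα
  have hd : α.degree = mdeg α := by
    rw [Finsupp.degree_eq_sum]; rfl
  rw [hd, hy]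
  split_ifs with h1
  · rw [h1, eval_monomial, Finsupp.prod_fintype _ _ (by simp)]; simp
  · rw [zero_pow (by omega)]; simp

theorem eval_homog_pos {n : ℕ} (p : RPoly n) (y : Fin (n + 1) → ℝ) (hy : y 0 ≠ 0) :
    eval y (homogenize p) = y 0 ^ p.totalDegree * eval (fun i => y (Fin.succ i) / y 0) p := by
  rw [← eval_homog_one p, ← eval_homog_smul]
  congr 2
  funext i
  refine Fin.cases ?_ (fun i => ?_) i
  · simp
  · simp; field_simp

/-- quadratic module generated by a set -/
noncomputable def genM {N : ℕ} (Gs : Set (RPoly N)) : AddSubmonoid (RPoly N) :=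
  AddSubmonoid.closure {p | ∃ q, ∃ g ∈ Gs, p = q ^ 2 * g}

theorem genM_base {N : ℕ} {Gs : Set (RPoly N)} {g : RPoly N} (hg : g ∈ Gs) (q : RPoly N) :
    q ^ 2 * g ∈ genM Gs := AddSubmonoid.subset_closure ⟨q, g, hg, rfl⟩

theorem genM_mem {N : ℕ} {Gs : Set (RPoly N)} {g : RPoly N} (hg : g ∈ Gs) : g ∈ genM Gs := by
  simpa using genM_base hg 1

theorem genM_sq {N : ℕ} {Gs : Set (RPoly N)} (q m : RPoly N) (hm : m ∈ genM Gs) :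
    q ^ 2 * m ∈ genM Gs := by
  refine AddSubmonoid.closure_induction (motive := fun m _ => q ^ 2 * m ∈ genM Gs) ?_ ?_ ?_ hm
  · rintro m ⟨r, g, hg, rfl⟩
    rw [← mul_assoc, ← mul_pow]; exact genM_base hg _
  · simp [zero_mem]
  · intro a b _ _ ha hb
    rw [mul_add]; exact add_mem ha hb

theorem genM_ideal {N : ℕ} {Gs : Set (RPoly N)} {g : RPoly N} (hg : g ∈ Gs) (hg' : -g ∈ Gs)
    (q : RPoly N) : g * q ∈ genM Gs := by
  have e : g * q = (C (1/2) * (q + 1)) ^ 2 * g + (C (1/2) * (q - 1)) ^ 2 * (-g) := by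
    have e2 : (C (1/2) ^ 2 * 4 : RPoly N) = 1 := by
      rw [show (4 : RPoly N) = C 4 from rfl, ← C_pow, ← C_mul]; norm_num
    linear_combination (- g * q) * e2
  rw [e]
  exact add_mem (genM_base hg _) (genM_base hg' _)

/-- sign sflip -/
noncomputable def sflip {N : ℕ} : RPoly N →ₐ[ℝ] RPoly N := aeval fun i => -X i

theorem eval_flip {N : ℕ} (u : Fin N → ℝ) (p : RPoly N) : eval u (sflip p) = eval (-u) p := by
  induction p using MvPolynomial.induction_on with
  | C c => simp [sflip]
  | add p q hp hq => simp [hp, hq]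
  | mul_X p i hp => simp [hp]; simp [sflip]

theorem genM_flip {N : ℕ} {Gs : Set (RPoly N)} (hG : ∀ g ∈ Gs, sflip g = g) (m : RPoly N)
    (hm : m ∈ genM Gs) : sflip m ∈ genM Gs := by
  refine AddSubmonoid.closure_induction (motive := fun m _ => sflip m ∈ genM Gs) ?_ ?_ ?_ hm
  · rintro m ⟨r, g, hg, rfl⟩
    rw [map_mul, map_pow, hG g hg]; exact genM_base hg _
  · simp [zero_mem]
  · intro a b _ _ ha hb
    rw [map_add]; exact add_mem ha hb

theorem PosJet.sflip_jet {N : ℕ} {u : Fin N → ℝ} {P : RPoly N} (h : PosJet (-u) P) :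
    PosJet u (sflip P) := by
  obtain ⟨ε, hε, B, hB⟩ := h
  refine ⟨ε, hε, B, ?_⟩
  have h1 := Ideal.mem_map_of_mem (sflip : RPoly N →ₐ[ℝ] RPoly N) hB
  rw [Ideal.map_pow] at h1
  have h2 : Ideal.map (sflip : RPoly N →ₐ[ℝ] RPoly N) (mU (-u)) ≤ mU u := by
    rw [Ideal.map_le_iff_le_comap]
    intro p hp
    rw [Ideal.mem_comap, mem_mU, eval_flip]
    exact mem_mU.1 hp
  have h3 := Ideal.pow_right_mono h2 3 h1
  have hy : ∀ i, sflip (yv (-u) i) = - yv u i := by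
    intro i; simp [sflip, yv]; ring
  have hC : ∀ c : ℝ, sflip (C c : RPoly N) = C c := fun c => by simp [sflip]
  simp only [map_sub, map_add, map_sum, map_mul, map_pow, hy, hC] at h3
  convert h3 using 3
  · simp
  · refine Finset.sum_congr rfl fun k _ => ?_
    simp

open MvPolynomial MeasureTheory

/-- even version of the homogenized constraints -/
noncomputable def chat {n : ℕ} (c : ℕ → RPoly n) (j : ℕ) : RPoly (n + 1) :=
  X 0 ^ ((c j).totalDegree % 2) * homogenize (c j)

/-- generators -/
noncomputable def Gens {n : ℕ} (E I : Finset ℕ) (c : ℕ → RPoly n) : Set (RPoly (n + 1)) :=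
  {g | g = 1 ∨ g = sphereP n ∨ g = - sphereP n ∨ (∃ j ∈ E, g = chat c j ∨ g = - chat c j) ∨
    ∃ j ∈ I, g = chat c j}

theorem gens_qmod {n : ℕ} (E I : Finset ℕ) (c : ℕ → RPoly n) : QMod (genM (Gens E I c)) where
  one := genM_mem (Or.inl rfl)
  sq := genM_sq
  sph := genM_ideal (Or.inr (Or.inl rfl)) (Or.inr (Or.inr (Or.inl rfl)))

theorem even_deg_aux (l : ℕ) : (-1 : ℝ) ^ (l % 2) * (-1) ^ l = 1 := by
  rcases Nat.even_or_odd l with h | h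
  · rw [Nat.even_iff.1 h, h.neg_one_pow]; simp
  · rw [Nat.odd_iff.1 h, h.neg_one_pow]; simp

theorem eval_neg_homog {n : ℕ} (p : RPoly n) (y : Fin (n + 1) → ℝ) :
    eval (-y) (homogenize p) = (-1) ^ p.totalDegree * eval y (homogenize p) := by
  rw [← eval_homog_smul]; congr 2; simp

theorem sflip_chat {n : ℕ} (c : ℕ → RPoly n) (j : ℕ) : sflip (chat c j) = chat c j := by
  apply MvPolynomial.funext
  intro x
  rw [eval_flip]
  simp only [chat, map_mul, map_pow, eval_X, eval_neg_homog, Pi.neg_apply]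
  rw [neg_pow (x 0)]
  linear_combination (x 0 ^ ((c j).totalDegree % 2) * eval x (homogenize (c j))) * even_deg_aux (c j).totalDegree

theorem sflip_sphere (n : ℕ) : sflip (sphereP n) = sphereP n := by
  apply MvPolynomial.funext
  intro x
  rw [eval_flip]
  simp [sphereP]

theorem sflip_gens {n : ℕ} (E I : Finset ℕ) (c : ℕ → RPoly n) : ∀ g ∈ Gens E I c, sflip g = g := by
  rintro g (rfl | rfl | rfl | ⟨j, _, rfl | rfl⟩ | ⟨j, _, rfl⟩)
  · simp
  · exact sflip_sphere n
  · rw [map_neg, sflip_sphere]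
  · exact sflip_chat c j
  · rw [map_neg, sflip_chat]
  · exact sflip_chat c j

theorem W_aux {N : ℕ} (u : Fin (N + 1) → ℝ) (hu : 0 < u 0) (k : ℕ) (hk : k < 2) :
    ∃ Q : RPoly (N + 1), X 0 ^ k * Q ^ 2 - 1 ∈ mU u ^ 2 := by
  interval_cases k
  · exact ⟨1, by simp⟩
  · set t : RPoly (N + 1) := 1 - C (1 / u 0) * X 0 with ht
    have htm : t ∈ mU u := by rw [mem_mU]; simp [ht, hu.ne']
    refine ⟨C (1 / Real.sqrt (u 0)) * (1 + C (1/2) * t), ?_⟩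
    have e1 : (X 0 : RPoly (N + 1)) = C (u 0) * (1 - t) := by
      have : (C (u 0) * C (1 / u 0) : RPoly (N + 1)) = 1 := by
        rw [← C_mul]; simp [hu.ne']
      rw [ht]; linear_combination (-X 0) * this
    have e2 : (C (u 0) * C (1 / Real.sqrt (u 0)) ^ 2 : RPoly (N + 1)) = 1 := by
      rw [← C_pow, ← C_mul, div_pow, Real.sq_sqrt hu.le]
      simp [hu.ne']
    have e3 : (2 * C (1/2) : RPoly (N + 1)) = 1 := by
      rw [show (2 : RPoly (N + 1)) = C 2 from rfl, ← C_mul]; norm_num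
    have : X 0 ^ 1 * (C (1 / Real.sqrt (u 0)) * (1 + C (1/2) * t)) ^ 2 - 1 =
        (-1 + C (1/2) ^ 2 * (1 - t)) * t ^ 2 := by
      rw [e1]
      linear_combination ((1 - t) * (1 + C (1/2) * t) ^ 2) * e2 + (t * (1 - t)) * e3
    rw [this]
    exact Ideal.mul_mem_left _ _ (Ideal.pow_mem_pow htm 2)

theorem F_even {n d : ℕ} (f : RPoly n) (hfd : f.totalDegree = d) (hd : Even d) (fmin : ℝ)
    (u : Fin (n + 1) → ℝ) :
    eval (-u) (homogenize f - C fmin * (X 0 : RPoly (n + 1)) ^ d) =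
    eval u (homogenize f - C fmin * (X 0 : RPoly (n + 1)) ^ d) := by
  simp only [map_sub, map_mul, map_pow, eval_X, eval_C, eval_neg_homog, hfd, hd.neg_one_pow,
    Pi.neg_apply, hd.neg_pow, one_mul]

theorem d_even {n d : ℕ} (f : RPoly n) (hfd : f.totalDegree = d) (hd : d ≠ 0)
    (hpd : ∀ x : Fin n → ℝ, x ≠ 0 → 0 < eval x (homogeneousComponent d f)) : Even d := by
  have hn : n ≠ 0 := by
    rintro rfl
    apply hd
    rw [← hfd, MvPolynomial.eq_C_of_isEmpty f, totalDegree_C]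
  haveI : Nonempty (Fin n) := ⟨⟨0, by omega⟩⟩
  set x : Fin n → ℝ := fun _ => 1 with hx
  have hx0 : x ≠ 0 := fun h => by
    have := congrFun h (Classical.arbitrary _); simp [hx] at this
  have h1 := hpd x hx0
  have h2 := hpd (-x) (neg_ne_zero.2 hx0)
  have e1 := eval_homog_zero f (Fin.cons 0 x) (by simp)
  have e2 := eval_homog_zero f (-(Fin.cons 0 x)) (by simp)
  rw [eval_neg_homog, e1, hfd] at e2
  simp only [Fin.cons_succ, Pi.neg_apply] at e2
  change _ * eval x _ = eval (-x) _ at e2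
  by_contra hodd
  rw [(Nat.not_even_iff_odd.1 hodd).neg_one_pow] at e2
  linarith

theorem F_mem (n d : ℕ) (E I : Finset ℕ) (c : ℕ → RPoly n)
    (f : RPoly n) (hfd : f.totalDegree = d) (hd : d ≠ 0)
    (hpd : ∀ x : Fin n → ℝ, x ≠ 0 → 0 < eval x (homogeneousComponent d f))
    (fmin : ℝ) (hfmin : IsGLB {v : ℝ | ∃ x ∈ Kset E I c, v = eval x f} fmin)
    (hopt : ∀ u : Fin (n + 1) → ℝ,
      (u ∈ Khom E I c ∧ ∀ x ∈ Khom E I c,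
        eval u (homogenize f - C fmin * (X 0 : RPoly (n + 1)) ^ d)
          ≤ eval x (homogenize f - C fmin * (X 0 : RPoly (n + 1)) ^ d)) →
      OptCondsAt (OS E) (gEqH c) (OS I) (gInH c)
        (homogenize f - C fmin * (X 0 : RPoly (n + 1)) ^ d) u) :
    homogenize f - C fmin * (X 0 : RPoly (n + 1)) ^ d ∈ genM (Gens E I c) := by
  have hde := d_even f hfd hd hpd
  set F := homogenize f - C fmin * (X 0 : RPoly (n + 1)) ^ d with hF
  have hFz : ∀ x : Fin (n + 1) → ℝ, x 0 = 0 → ∑ i, x i ^ 2 = 1 → 0 < eval x F := by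
    intro x hx0 hs
    rw [hF, map_sub, map_mul, map_pow, eval_X, hx0, zero_pow hd, mul_zero, sub_zero,
      eval_homog_zero f x hx0, hfd]
    apply hpd
    intro h0
    rw [Fin.sum_univ_succ, hx0] at hs
    have : ∀ i : Fin n, x i.succ = 0 := fun i => congrFun h0 i
    simp [this] at hs
  have hFp : ∀ x ∈ Khom E I c, 0 < x 0 → 0 ≤ eval x F := by
    intro x hx hx0
    have hxK : (fun i => x (Fin.succ i) / x 0) ∈ Kset E I c := by
      constructor
      · intro j hj
        have := hx.1 j hj
        rw [eval_homog_pos _ _ hx0.ne'] at this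
        exact (mul_eq_zero.1 this).resolve_left (pow_pos hx0 _).ne'
      · intro j hj
        have := hx.2.1 j hj
        rw [eval_homog_pos _ _ hx0.ne'] at this
        exact nonneg_of_mul_nonneg_right this (pow_pos hx0 _)
    have h1 := hfmin.1 ⟨_, hxK, rfl⟩
    rw [hF, map_sub, map_mul, map_pow, eval_X, eval_C, eval_homog_pos _ _ hx0.ne', hfd]
    have := mul_le_mul_of_nonneg_left h1 (pow_pos hx0 d).le
    linarith
  have hFK : ∀ x ∈ Khom E I c, 0 ≤ eval x F := by
    intro x hx
    rcases hx.2.2.2.eq_or_lt with h | h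
    · exact (hFz x h.symm hx.2.2.1).le
    · exact hFp x hx h
  have hsph : ∀ x, (∀ m ∈ genM (Gens E I c), 0 ≤ eval x m) → ∑ i, x i ^ 2 = 1 := by
    intro x hx
    have h1 := hx _ ((gens_qmod E I c).sph 1)
    have h2 := hx _ ((gens_qmod E I c).sph (-1))
    simp at h1 h2
    linarith
  have hKh : ∀ x, (∀ m ∈ genM (Gens E I c), 0 ≤ eval x m) → 0 < x 0 → x ∈ Khom E I c := by
    intro x hx hx0
    refine ⟨fun j hj => ?_, fun j hj => ?_, hsph x hx, hx0.le⟩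
    · have h1 := hx _ (genM_mem (g := chat c j) (Or.inr (Or.inr (Or.inr (Or.inl ⟨j, hj, Or.inl rfl⟩)))))
      have h2 := hx _ (genM_mem (g := - chat c j) (Or.inr (Or.inr (Or.inr (Or.inl ⟨j, hj, Or.inr rfl⟩)))))
      rw [map_neg] at h2
      have h3 : eval x (chat c j) = 0 := by linarith
      rw [chat, map_mul, map_pow, eval_X] at h3
      exact (mul_eq_zero.1 h3).resolve_left (pow_pos hx0 _).ne'
    · have h1 := hx _ (genM_mem (g := chat c j) (Or.inr (Or.inr (Or.inr (Or.inr ⟨j, hj, rfl⟩)))))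
      rw [chat, map_mul, map_pow, eval_X] at h1
      exact nonneg_of_mul_nonneg_right h1 (pow_pos hx0 _)
  have hneg : ∀ x, (∀ m ∈ genM (Gens E I c), 0 ≤ eval x m) →
      (∀ m ∈ genM (Gens E I c), 0 ≤ eval (-x) m) := by
    intro x hx m hm
    rw [← eval_flip]
    exact hx _ (genM_flip (sflip_gens E I c) m hm)
  have hloc : ∀ u, (∀ m ∈ genM (Gens E I c), 0 ≤ eval u m) → eval u F = 0 → 0 < u 0 →
      ∃ s ∈ genM (Gens E I c), PosJet u (F - s) := by
    intro u hu hu0 hup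
    have huK := hKh u hu hup
    have hO := hopt u ⟨huK, fun x hx => by rw [hu0]; exact hFK x hx⟩
    choose Q hQ using fun j : ℕ => W_aux u hup ((c j).totalDegree % 2) (Nat.mod_lt _ (by norm_num))
    set W : Option ℕ → RPoly (n + 1) := fun o => o.elim 1 fun j =>
      X 0 ^ ((c j).totalDegree % 2) * Q j ^ 2 with hW
    have hW1 : ∀ o, W o - 1 ∈ mU u ^ 2 := by
      intro o
      cases o with
      | none => simp [hW]
      | some j => exact hQ j
    have hOS : ∀ (S : Finset ℕ) (o : Option ℕ), o ∈ OS S → o = none ∨ ∃ j ∈ S, o = some j := by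
      intro S o ho
      simp only [OS, Finset.mem_insert, Finset.mem_image] at ho
      rcases ho with h | ⟨j, hj, h⟩
      · exact Or.inl h
      · exact Or.inr ⟨j, hj, h.symm⟩
    obtain ⟨a, b, hb, hJ⟩ := local_cert hO hu0 (by
      intro o ho
      rcases hOS E o ho with rfl | ⟨j, hj, rfl⟩
      · simp [gEqH, sphereP, huK.2.2.1]
      · exact huK.1 j hj) W W (fun o _ => hW1 o) (fun o _ _ => hW1 o)
    refine ⟨_, ?_, hJ⟩
    refine add_mem (sum_mem fun o ho => ?_) (sum_mem fun o ho => ?_)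
    · rcases hOS E o ho with rfl | ⟨j, hj, rfl⟩
      · rw [mul_assoc]
        exact (gens_qmod E I c).sph _
      · have : gEqH c (some j) * W (some j) * a (some j) = chat c j * (Q j ^ 2 * a (some j)) := by
          simp only [gEqH, hW, Option.elim, chat]; ring
        rw [this]
        exact genM_ideal (Or.inr (Or.inr (Or.inr (Or.inl ⟨j, hj, Or.inl rfl⟩))))
          (Or.inr (Or.inr (Or.inr (Or.inl ⟨j, hj, Or.inr rfl⟩)))) _
    · rcases hOS I o ho with rfl | ⟨j, hj, rfl⟩
      · rw [hb none ho (by simp [gInH, hup.ne'])]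
        simp [zero_mem]
      · have : gInH c (some j) * W (some j) * b (some j) ^ 2 = (Q j * b (some j)) ^ 2 * chat c j := by
          simp only [gInH, hW, Option.elim, chat]; ring
        rw [this]
        exact genM_base (Or.inr (Or.inr (Or.inr (Or.inr ⟨j, hj, rfl⟩)))) _
  apply main_mem (gens_qmod E I c)
  · intro x hx
    rcases lt_trichotomy (x 0) 0 with h | h | h
    · rw [hF, ← F_even f hfd hde]
      exact hFK _ (hKh (-x) (hneg x hx) (by simpa using h))
    · exact (hFz x h (hsph x hx)).le
    · exact hFK _ (hKh x hx h)
  · intro u hu hu0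
    rcases lt_trichotomy (u 0) 0 with h | h | h
    · have hm0 : eval (-u) F = 0 := by
        rw [← hu0, hF, F_even f hfd hde]
      obtain ⟨s, hs, hJ⟩ := hloc (-u) (hneg u hu) hm0 (by simpa using h)
      refine ⟨sflip s, genM_flip (sflip_gens E I c) s hs, ?_⟩
      have hFf : sflip F = F := by
        apply MvPolynomial.funext
        intro x
        rw [eval_flip, hF, F_even f hfd hde]
      have := hJ.sflip_jet
      rwa [map_sub, hFf] at this
    · exact absurd hu0 (hFz u h (hsph u hu)).ne'
    · exact hloc u hu hu0 h

open MvPolynomial MeasureTheory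

theorem sos_zero {n : ℕ} : IsSOS (0 : RPoly n) := ⟨[], by simp⟩
theorem sos_sq {n : ℕ} (q : RPoly n) : IsSOS (q ^ 2) := ⟨[q], by simp⟩
theorem sos_add {n : ℕ} {p q : RPoly n} (hp : IsSOS p) (hq : IsSOS q) : IsSOS (p + q) := by
  obtain ⟨L, rfl⟩ := hp
  obtain ⟨L', rfl⟩ := hq
  exact ⟨L ++ L', by simp⟩
theorem sos_sum {n : ℕ} {ι : Type} (S : Finset ι) (p : ι → RPoly n) (hp : ∀ i ∈ S, IsSOS (p i)) :
    IsSOS (∑ i ∈ S, p i) := by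
  classical
  induction S using Finset.induction_on with
  | empty => simpa using sos_zero
  | insert a s ha ih =>
    rw [Finset.sum_insert ha]
    exact sos_add (hp a (by simp)) (ih fun i hi => hp i (by simp [hi]))
theorem sos_sq_mul {n : ℕ} (q : RPoly n) {p : RPoly n} (hp : IsSOS p) : IsSOS (q ^ 2 * p) := by
  obtain ⟨L, rfl⟩ := hp
  refine ⟨L.map (q * ·), ?_⟩
  rw [List.map_map, ← List.sum_map_mul_left]
  congr 1
  apply List.map_congr_left
  intro a _
  simp [mul_pow]
theorem sos_nonneg {n : ℕ} {p : RPoly n} (hp : IsSOS p) (x : Fin n → ℝ) : 0 ≤ eval x p := by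
  obtain ⟨L, rfl⟩ := hp
  rw [map_list_sum]
  apply List.sum_nonneg
  intro a ha
  simp only [List.map_map, List.mem_map, Function.comp] at ha
  obtain ⟨b, _, rfl⟩ := ha
  rw [map_pow]; positivity

/-- the denominator polynomial -/
noncomputable def Th (n : ℕ) : RPoly n := 1 + ∑ i, (X i : RPoly n) ^ 2

theorem sos_Th_mul {n : ℕ} {p : RPoly n} (hp : IsSOS p) : IsSOS (Th n * p) := by
  rw [Th, add_mul, one_mul, Finset.sum_mul]
  exact sos_add hp (sos_sum _ _ fun i _ => sos_sq_mul _ hp)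

theorem Th_pos {n : ℕ} (x : Fin n → ℝ) : 0 < eval x (Th n) := by
  simp only [Th, map_add, map_one, map_sum, map_pow, eval_X]
  have : 0 ≤ ∑ i, x i ^ 2 := Finset.sum_nonneg fun i _ => sq_nonneg _
  linarith

theorem Th_deg (n : ℕ) : (Th n).totalDegree ≤ 2 := by
  refine (totalDegree_add _ _).trans (max_le (by simp) ?_)
  refine totalDegree_finsetSum_le fun i _ => ?_
  exact (totalDegree_pow _ _).trans (by simp)

theorem Th_pow_deg (n k : ℕ) : (Th n ^ k).totalDegree ≤ 2 * k :=
  (totalDegree_pow _ _).trans (by have := Th_deg n; nlinarith)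

/-- inverse square root of theta -/
noncomputable def sg {n : ℕ} (x : Fin n → ℝ) : ℝ := (Real.sqrt (eval x (Th n)))⁻¹

theorem sg_sq {n : ℕ} (x : Fin n → ℝ) : eval x (Th n) * sg x ^ 2 = 1 := by
  rw [sg, inv_pow, Real.sq_sqrt (Th_pos x).le, mul_inv_cancel₀ (Th_pos x).ne']

/-- points on the sphere -/
noncomputable def pt {n : ℕ} (e : ℝ) (x : Fin n → ℝ) : Fin (n + 1) → ℝ :=
  (e * sg x) • (Fin.cons 1 x : Fin (n + 1) → ℝ)

/-- coordinates polynomial -/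
noncomputable def cx {n : ℕ} (i : Fin (n + 1)) : RPoly n := Fin.cases 1 (fun i => X i) i

theorem cx_deg {n : ℕ} (i : Fin (n + 1)) : (cx i : RPoly n).totalDegree ≤ 1 := by
  refine Fin.cases ?_ (fun i => ?_) i
  · simp [cx]
  · simp [cx]

theorem eval_cx {n : ℕ} (i : Fin (n + 1)) (x : Fin n → ℝ) :
    (Fin.cons 1 x : Fin (n + 1) → ℝ) i = eval x (cx i) := by
  refine Fin.cases ?_ (fun i => ?_) i
  · simp [cx]
  · simp [cx]

theorem split_q {n : ℕ} (q : RPoly (n + 1)) : ∃ (K : ℕ) (a b : RPoly n),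
    a.totalDegree ≤ 2 * K ∧ b.totalDegree ≤ 2 * K + 1 ∧ ∀ x (e : ℝ), e ^ 2 = 1 →
      eval x (Th n) ^ K * eval (pt e x) q = eval x a + e * sg x * eval x b := by
  induction q using MvPolynomial.induction_on with
  | C c => exact ⟨0, C c, 0, by simp, by simp, fun x e _ => by simp⟩
  | add p q hp hq =>
    obtain ⟨K, a, b, ha, hb, h⟩ := hp
    obtain ⟨K', a', b', ha', hb', h'⟩ := hq
    have hm : ∀ (k m l : ℕ) (p : RPoly n), p.totalDegree ≤ m → m + 2 * k ≤ l → (Th n ^ k * p).totalDegree ≤ l := by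
      intro k m l p hp hl
      have := totalDegree_mul (Th n ^ k) p
      have := Th_pow_deg n k
      omega
    refine ⟨K + K', Th n ^ K' * a + Th n ^ K * a', Th n ^ K' * b + Th n ^ K * b', ?_, ?_, ?_⟩
    · exact (totalDegree_add _ _).trans (max_le (hm _ _ _ _ ha (by omega)) (hm _ _ _ _ ha' (by omega)))
    · exact (totalDegree_add _ _).trans (max_le (hm _ _ _ _ hb (by omega)) (hm _ _ _ _ hb' (by omega)))
    · intro x e he
      have h1 := h x e he
      have h2 := h' x e he
      simp only [map_add, map_mul, map_pow, pow_add]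
      linear_combination (eval x (Th n) ^ K') * h1 + (eval x (Th n) ^ K) * h2
  | mul_X p i hp =>
    obtain ⟨K, a, b, ha, hb, h⟩ := hp
    refine ⟨K + 1, b * cx i, Th n * (a * cx i), ?_, ?_, ?_⟩
    · have := totalDegree_mul b (cx i)
      have := cx_deg i
      omega
    · have := totalDegree_mul (Th n) (a * cx i)
      have := totalDegree_mul a (cx i)
      have := cx_deg i
      have := Th_deg n
      omega
    · intro x e he
      have h1 := h x e he
      have hs := sg_sq x
      have hX : eval (pt e x) (X i) = e * sg x * eval x (cx i) := by
        rw [eval_X, pt, Pi.smul_apply, eval_cx, smul_eq_mul]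
      rw [map_mul, hX]
      simp only [map_mul, pow_succ]
      linear_combination (eval x (Th n) * e * sg x * eval x (cx i)) * h1
        + (eval x b * eval x (cx i) * e ^ 2) * hs + (eval x b * eval x (cx i)) * he

theorem avg_sq {n : ℕ} (q : RPoly (n + 1)) : ∃ K0 : ℕ, ∀ r : ℕ, ∃ σ : RPoly n, IsSOS σ ∧
    σ.totalDegree ≤ 2 * (K0 + r) ∧ ∀ x, eval x (Th n) ^ (K0 + r) *
      ((eval (pt 1 x) q ^ 2 + eval (pt (-1) x) q ^ 2) / 2) = eval x σ := by
  obtain ⟨K, a, b, ha, hb, h⟩ := split_q q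
  refine ⟨2 * K + 1, fun r => ?_⟩
  induction r with
  | zero =>
    refine ⟨Th n * a ^ 2 + b ^ 2, sos_add (sos_Th_mul (sos_sq _)) (sos_sq _), ?_, fun x => ?_⟩
    · refine (totalDegree_add _ _).trans (max_le ?_ ?_)
      · have := totalDegree_mul (Th n) (a ^ 2)
        have := totalDegree_pow a 2
        have := Th_deg n
        omega
      · have := totalDegree_pow b 2
        omega
    · have h1 := h x 1 (by norm_num)
      have h2 := h x (-1) (by norm_num)
      have hs := sg_sq x
      have e1 : eval x (Th n) ^ (2 * K + 1 + 0) *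
          ((eval (pt 1 x) q ^ 2 + eval (pt (-1) x) q ^ 2) / 2) =
          eval x (Th n) * (((eval x (Th n) ^ K * eval (pt 1 x) q) ^ 2 +
          (eval x (Th n) ^ K * eval (pt (-1) x) q) ^ 2) / 2) := by ring
      rw [e1, h1, h2]
      simp only [map_add, map_mul, map_pow]
      linear_combination (eval x b ^ 2) * hs
  | succ r ih =>
    obtain ⟨σ, h1, h2, h3⟩ := ih
    refine ⟨Th n * σ, sos_Th_mul h1, ?_, fun x => ?_⟩
    · have := totalDegree_mul (Th n) σ
      have := Th_deg n
      omega
    · rw [map_mul, ← h3]; ring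

theorem ideal_add {n : ℕ} {S : Finset ℕ} {c : ℕ → RPoly n} {k : ℕ} {p q : RPoly n}
    (hp : p ∈ IdealDeg S c k) (hq : q ∈ IdealDeg S c k) : p + q ∈ IdealDeg S c k := by
  obtain ⟨a, h1, rfl⟩ := hp
  obtain ⟨b, h2, rfl⟩ := hq
  refine ⟨fun j => a j + b j, fun j hj => ?_, by simp [mul_add, Finset.sum_add_distrib]⟩
  have := totalDegree_add (a j) (b j)
  have := h1 j hj
  have := h2 j hj
  beta_reduce
  omega

theorem qmod_add {n : ℕ} {S : Finset ℕ} {c : ℕ → RPoly n} {k : ℕ} {p q : RPoly n}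
    (hp : p ∈ QModDeg S c k) (hq : q ∈ QModDeg S c k) : p + q ∈ QModDeg S c k := by
  obtain ⟨a0, a, h0, h1, h2, rfl⟩ := hp
  obtain ⟨b0, b, g0, g1, g2, rfl⟩ := hq
  refine ⟨a0 + b0, fun j => a j + b j, sos_add h0 g0, ?_, fun j hj => ⟨sos_add (h2 j hj).1 (g2 j hj).1, ?_⟩, ?_⟩
  · exact (totalDegree_add _ _).trans (max_le h1 g1)
  · have := totalDegree_add (a j) (b j)
    have := (h2 j hj).2
    have := (g2 j hj).2
    beta_reduce
    omega
  · simp [mul_add, Finset.sum_add_distrib]; ring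

theorem ideal_zero {n : ℕ} {S : Finset ℕ} {c : ℕ → RPoly n} {k : ℕ}
    (hk : ∀ j ∈ S, (c j).totalDegree ≤ k) : (0 : RPoly n) ∈ IdealDeg S c k :=
  ⟨fun _ => 0, fun j hj => by simpa using hk j hj, by simp⟩

theorem ideal_single {n : ℕ} {S : Finset ℕ} {c : ℕ → RPoly n} {k : ℕ}
    (hk : ∀ j ∈ S, (c j).totalDegree ≤ k) (j : ℕ) (hj : j ∈ S) (σ : RPoly n)
    (hd : σ.totalDegree + (c j).totalDegree ≤ k) : c j * σ ∈ IdealDeg S c k := by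
  classical
  refine ⟨fun i => if i = j then σ else 0, fun i hi => ?_, ?_⟩
  · by_cases h : i = j
    · subst h; simpa using hd
    · simpa [h] using hk i hi
  · simp [hj]

theorem qmod_sos {n : ℕ} {S : Finset ℕ} {c : ℕ → RPoly n} {k : ℕ}
    (hk : ∀ j ∈ S, (c j).totalDegree ≤ k) (σ : RPoly n) (hσ : IsSOS σ)
    (hd : σ.totalDegree ≤ k) : σ ∈ QModDeg S c k :=
  ⟨σ, fun _ => 0, hσ, hd, fun j hj => ⟨sos_zero, by simpa using hk j hj⟩, by simp⟩

theorem qmod_single {n : ℕ} {S : Finset ℕ} {c : ℕ → RPoly n} {k : ℕ}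
    (hk : ∀ j ∈ S, (c j).totalDegree ≤ k) (j : ℕ) (hj : j ∈ S) (σ : RPoly n) (hσ : IsSOS σ)
    (hd : σ.totalDegree + (c j).totalDegree ≤ k) : c j * σ ∈ QModDeg S c k := by
  classical
  refine ⟨0, fun i => if i = j then σ else 0, sos_zero, by simp, fun i hi => ?_, ?_⟩
  · by_cases h : i = j
    · subst h; simpa using ⟨hσ, hd⟩
    · simpa [h] using ⟨sos_zero, hk i hi⟩
  · simp [hj]

/-- dehomogenized certificate -/
def Cert {n : ℕ} (E I : Finset ℕ) (c : ℕ → RPoly n) (P : RPoly (n + 1)) : Prop :=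
  ∃ k0 : ℕ, ∀ k, k0 ≤ k → ∃ p1 ∈ IdealDeg E c (2 * k), ∃ p2 ∈ QModDeg I c (2 * k),
    ∀ x, eval x (Th n) ^ k * ((eval (pt 1 x) P + eval (pt (-1) x) P) / 2) = eval x (p1 + p2)

/-- degree bound -/
noncomputable def Dc {n : ℕ} (E I : Finset ℕ) (c : ℕ → RPoly n) : ℕ :=
  ∑ j ∈ E, (c j).totalDegree + ∑ j ∈ I, (c j).totalDegree

theorem Dc_E {n : ℕ} {E I : Finset ℕ} {c : ℕ → RPoly n} {k : ℕ} (h : Dc E I c ≤ k) :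
    ∀ j ∈ E, (c j).totalDegree ≤ k := fun j hj => by
  have := Finset.single_le_sum (f := fun j => (c j).totalDegree) (fun _ _ => Nat.zero_le _) hj
  simp only [Dc] at h; omega

theorem Dc_I {n : ℕ} {E I : Finset ℕ} {c : ℕ → RPoly n} {k : ℕ} (h : Dc E I c ≤ k) :
    ∀ j ∈ I, (c j).totalDegree ≤ k := fun j hj => by
  have := Finset.single_le_sum (f := fun j => (c j).totalDegree) (fun _ _ => Nat.zero_le _) hj
  simp only [Dc] at h; omega

theorem eval_pt_homog {n : ℕ} (p : RPoly n) (e : ℝ) (x : Fin n → ℝ) :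
    eval (pt e x) (homogenize p) = (e * sg x) ^ p.totalDegree * eval x p := by
  rw [pt, eval_homog_smul, eval_homog_one]

theorem pt_zero {n : ℕ} (e : ℝ) (x : Fin n → ℝ) : pt e x 0 = e * sg x := by simp [pt]

theorem eval_pt_chat {n : ℕ} (c : ℕ → RPoly n) (j : ℕ) : ∃ m : ℕ, (c j).totalDegree ≤ 2 * m ∧
    ∀ (e : ℝ), e ^ 2 = 1 → ∀ x, eval x (Th n) ^ m * eval (pt e x) (chat c j) = eval x (c j) := by
  refine ⟨((c j).totalDegree % 2 + (c j).totalDegree) / 2, by omega, fun e he x => ?_⟩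
  rw [chat, map_mul, map_pow, eval_X, eval_pt_homog, pt_zero, ← mul_assoc, ← mul_assoc,
    mul_assoc _ (_ ^ _) (_ ^ _), ← pow_add]
  set m := ((c j).totalDegree % 2 + (c j).totalDegree) / 2 with hm
  have : (c j).totalDegree % 2 + (c j).totalDegree = 2 * m := by omega
  rw [this, pow_mul, ← mul_pow, mul_pow e, he, one_mul, sg_sq, one_pow, one_mul]

theorem cert_of_mem {n : ℕ} (E I : Finset ℕ) (c : ℕ → RPoly n) (P : RPoly (n + 1))
    (hP : P ∈ genM (Gens E I c)) : Cert E I c P := by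
  refine AddSubmonoid.closure_induction (motive := fun P _ => Cert E I c P) ?_ ?_ ?_ hP
  · rintro m ⟨q, g, hg, rfl⟩
    obtain ⟨K0, hK⟩ := avg_sq q
    have hch : ∀ j, ∃ k1, ∀ k, k1 ≤ k → ∃ σ : RPoly n, IsSOS σ ∧
        σ.totalDegree + (c j).totalDegree ≤ 2 * k ∧ ∀ x, eval x (Th n) ^ k *
        ((eval (pt 1 x) (q ^ 2 * chat c j) + eval (pt (-1) x) (q ^ 2 * chat c j)) / 2)
          = eval x (c j * σ) := by
      intro j
      obtain ⟨m, hm, h⟩ := eval_pt_chat c j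
      refine ⟨K0 + m, fun k hk => ?_⟩
      obtain ⟨σ, h1, h2, h3⟩ := hK (k - m - K0)
      have hr : K0 + (k - m - K0) = k - m := by omega
      rw [hr] at h2 h3
      refine ⟨σ, h1, by omega, fun x => ?_⟩
      have e1 := h 1 (by norm_num) x
      have e2 := h (-1) (by norm_num) x
      have hk' : eval x (Th n) ^ k = eval x (Th n) ^ (k - m) * eval x (Th n) ^ m := by
        rw [← pow_add]; congr 1; omega
      rw [hk', map_mul, map_mul, map_mul, ← h3, map_pow, map_pow]
      linear_combination (eval x (Th n) ^ (k - m) * eval (pt 1 x) q ^ 2 / 2) * e1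
        + (eval x (Th n) ^ (k - m) * eval (pt (-1) x) q ^ 2 / 2) * e2
    have hsp : ∀ (e : ℝ), e ^ 2 = 1 → ∀ x : Fin n → ℝ, eval (pt e x) (sphereP n) = 0 := by
      intro e he x
      have hs := sg_sq x
      simp only [sphereP, map_sub, map_sum, map_pow, eval_X, map_one]
      rw [Fin.sum_univ_succ]
      simp only [pt, Pi.smul_apply,
        Fin.cons_zero, Fin.cons_succ, smul_eq_mul, mul_one, mul_pow, ← Finset.mul_sum, he, one_mul]
      simp only [Th, map_add, map_one, map_sum, map_pow, eval_X] at hs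
      linear_combination hs
    rcases hg with rfl | rfl | rfl | ⟨j, hj, rfl | rfl⟩ | ⟨j, hj, rfl⟩
    · refine ⟨max K0 (Dc E I c), fun k hk => ?_⟩
      have hk1 : K0 ≤ k := le_of_max_le_left hk
      have hk2 : Dc E I c ≤ 2 * k := by have := le_of_max_le_right hk; omega
      obtain ⟨σ, h1, h2, h3⟩ := hK (k - K0)
      rw [Nat.add_sub_cancel' hk1] at h2 h3
      refine ⟨0, ideal_zero (Dc_E hk2), σ, qmod_sos (Dc_I hk2) σ h1 h2, fun x => ?_⟩
      rw [zero_add, ← h3]; simp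
    · refine ⟨Dc E I c, fun k hk => ?_⟩
      have hk2 : Dc E I c ≤ 2 * k := by omega
      refine ⟨0, ideal_zero (Dc_E hk2), 0, qmod_sos (Dc_I hk2) 0 sos_zero (by simp), fun x => ?_⟩
      simp [hsp 1 (by norm_num) x, hsp (-1) (by norm_num) x]
    · refine ⟨Dc E I c, fun k hk => ?_⟩
      have hk2 : Dc E I c ≤ 2 * k := by omega
      refine ⟨0, ideal_zero (Dc_E hk2), 0, qmod_sos (Dc_I hk2) 0 sos_zero (by simp), fun x => ?_⟩
      simp [hsp 1 (by norm_num) x, hsp (-1) (by norm_num) x]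
    · obtain ⟨k1, hk1⟩ := hch j
      refine ⟨max k1 (Dc E I c), fun k hk => ?_⟩
      have hk2 : Dc E I c ≤ 2 * k := by have := le_of_max_le_right hk; omega
      obtain ⟨σ, h1, h2, h3⟩ := hk1 k (le_of_max_le_left hk)
      refine ⟨c j * σ, ideal_single (Dc_E hk2) j hj σ h2, 0,
        qmod_sos (Dc_I hk2) 0 sos_zero (by simp), fun x => ?_⟩
      rw [add_zero]; exact h3 x
    · obtain ⟨k1, hk1⟩ := hch j
      refine ⟨max k1 (Dc E I c), fun k hk => ?_⟩
      have hk2 : Dc E I c ≤ 2 * k := by have := le_of_max_le_right hk; omega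
      obtain ⟨σ, h1, h2, h3⟩ := hk1 k (le_of_max_le_left hk)
      refine ⟨c j * (-σ), ideal_single (Dc_E hk2) j hj (-σ) (by rwa [totalDegree_neg]), 0,
        qmod_sos (Dc_I hk2) 0 sos_zero (by simp), fun x => ?_⟩
      rw [add_zero, mul_neg (c j), map_neg (eval x), ← h3 x]
      simp only [mul_neg, map_neg]
      ring
    · obtain ⟨k1, hk1⟩ := hch j
      refine ⟨max k1 (Dc E I c), fun k hk => ?_⟩
      have hk2 : Dc E I c ≤ 2 * k := by have := le_of_max_le_right hk; omega
      obtain ⟨σ, h1, h2, h3⟩ := hk1 k (le_of_max_le_left hk)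
      refine ⟨0, ideal_zero (Dc_E hk2), c j * σ, qmod_single (Dc_I hk2) j hj σ h1 h2, fun x => ?_⟩
      rw [zero_add]; exact h3 x
  · refine ⟨Dc E I c, fun k hk => ?_⟩
    have hk2 : Dc E I c ≤ 2 * k := by omega
    refine ⟨0, ideal_zero (Dc_E hk2), 0, qmod_sos (Dc_I hk2) 0 sos_zero (by simp), fun x => ?_⟩
    simp
  · rintro a b _ _ ⟨ka, ha⟩ ⟨kb, hb⟩
    refine ⟨max ka kb, fun k hk => ?_⟩
    obtain ⟨p1, h1, p2, h2, h3⟩ := ha k (le_of_max_le_left hk)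
    obtain ⟨q1, g1, q2, g2, g3⟩ := hb k (le_of_max_le_right hk)
    refine ⟨p1 + q1, ideal_add h1 g1, p2 + q2, qmod_add h2 g2, fun x => ?_⟩
    have e1 := h3 x
    have e2 := g3 x
    simp only [map_add] at *
    linear_combination e1 + e2

theorem den_val {n : ℕ} (d : ℕ) (E I : Finset ℕ) (c : ℕ → RPoly n) (f : RPoly n)
    (fmin : ℝ) (hfmin : IsGLB {v : ℝ | ∃ x ∈ Kset E I c, v = eval x f} fmin) (k : ℕ)
    (h : ∃ p1 ∈ IdealDeg E c (2 * k + d), ∃ p2 ∈ QModDeg I c (2 * k + d),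
      (1 + ∑ i, (X i : RPoly n) ^ 2) ^ k * (f - C fmin) = p1 + p2) :
    DenRelaxVal E I c f d k = fmin := by
  apply IsGreatest.csSup_eq
  refine ⟨h, ?_⟩
  rintro γ ⟨p1, ⟨q, _, rfl⟩, p2, ⟨σ0, σ, h0, _, hσ, rfl⟩, he⟩
  apply hfmin.2
  rintro v ⟨x, hx, rfl⟩
  have h1 := congrArg (eval x) he
  change eval x (Th n ^ k * (f - C γ)) = _ at h1
  rw [map_mul, map_pow, map_sub, eval_C, map_add, map_add, map_sum, map_sum] at h1
  have z1 : ∑ j ∈ E, eval x (c j * q j) = 0 :=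
    Finset.sum_eq_zero fun j hj => by rw [map_mul, hx.1 j hj, zero_mul]
  have z2 : 0 ≤ ∑ j ∈ I, eval x (c j * σ j) :=
    Finset.sum_nonneg fun j hj => by
      rw [map_mul]; exact mul_nonneg (hx.2 j hj) (sos_nonneg (hσ j hj).1 x)
  have z3 := sos_nonneg h0 x
  have h2 : 0 ≤ eval x (Th n) ^ k * (eval x f - γ) := by rw [h1, z1]; linarith
  have := nonneg_of_mul_nonneg_right h2 (pow_pos (Th_pos x) k)
  linarith

/-- Theorem 4.6(ii): finite convergence of the Moment-SOS hierarchy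
with denominators, when the top homogeneous part of `f` is positive definite. -/
theorem statement_10
    (n d : ℕ) (E I : Finset ℕ) (hEI : Disjoint E I) (c : ℕ → RPoly n)
    (f : RPoly n) (hfd : f.totalDegree = d)
    (hK : (Kset E I c).Nonempty)
    -- f^hm is a positive definite form
    (hpd : ∀ x : Fin n → ℝ, x ≠ 0 → 0 < eval x (homogeneousComponent d f))
    -- f_min = inf_K f is finite
    (fmin : ℝ) (hfmin : IsGLB {v : ℝ | ∃ x ∈ Kset E I c, v = eval x f} fmin)
    -- LICQC, SCC, SOSC at every global minimizer of (H)
    (hopt : ∀ u : Fin (n + 1) → ℝ,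
      (u ∈ Khom E I c ∧ ∀ x ∈ Khom E I c,
        eval u (homogenize f - C fmin * (X 0 : RPoly (n + 1)) ^ d)
          ≤ eval x (homogenize f - C fmin * (X 0 : RPoly (n + 1)) ^ d)) →
      OptCondsAt (OS E) (gEqH c) (OS I) (gInH c)
        (homogenize f - C fmin * (X 0 : RPoly (n + 1)) ^ d) u) :
    ∃ k0 : ℕ, ∀ k : ℕ, k0 ≤ k → DenRelaxVal E I c f d k = fmin := by
  by_cases hd : d = 0
  · refine ⟨Dc E I c, fun k hk => den_val d E I c f fmin hfmin k ?_⟩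
    have hk2 : Dc E I c ≤ 2 * k + d := by omega
    refine ⟨0, ideal_zero (Dc_E hk2), 0, qmod_sos (Dc_I hk2) 0 sos_zero (by simp), ?_⟩
    have hf : f = C (f.coeff 0) := totalDegree_eq_zero_iff_eq_C.1 (hfd.trans hd)
    have hval : fmin = f.coeff 0 := by
      apply hfmin.unique
      have : {v : ℝ | ∃ x ∈ Kset E I c, v = eval x f} = {f.coeff 0} := by
        ext v
        constructor
        · rintro ⟨x, _, rfl⟩
          rw [hf]; simp
        · rintro rfl
          obtain ⟨x, hx⟩ := hK
          refine ⟨x, hx, ?_⟩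
          conv_rhs => rw [hf]
          simp
      rw [this]; exact isGLB_singleton
    rw [hval, ← hf]; simp
  · have hmem := F_mem n d E I c f hfd hd hpd fmin hfmin hopt
    obtain ⟨m, hm⟩ := d_even f hfd hd hpd
    obtain ⟨k0, hk0⟩ := cert_of_mem E I c _ hmem
    refine ⟨k0, fun k hk => den_val d E I c f fmin hfmin k ?_⟩
    obtain ⟨p1, h1, p2, h2, h3⟩ := hk0 (k + m) (by omega)
    have hkm : 2 * (k + m) = 2 * k + d := by omega
    rw [hkm] at h1 h2
    refine ⟨p1, h1, p2, h2, ?_⟩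
    apply MvPolynomial.funext
    intro x
    rw [← h3 x]
    change eval x (Th n ^ k * _) = _
    have hs := sg_sq x
    have hdm : d = 2 * m := by omega
    simp only [map_mul, map_pow, map_sub, eval_C, eval_X, eval_pt_homog, pt_zero, hfd, one_mul]
    have e1 : (-1 * sg x) ^ d = sg x ^ d := by rw [hdm, pow_mul, pow_mul]; ring
    have e2 : eval x (Th n) ^ m * sg x ^ d = 1 := by
      rw [hdm, pow_mul, ← mul_pow, hs, one_pow]
    rw [e1, pow_add]
    linear_combination (-(eval x (Th n) ^ k * (eval x f - fmin))) * e2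
end

section
/- Let p, q ∈ ℝ[x], let σ0 ∈ QM(c_in), and set h = p − σ0. Assume: (a) there exist an integer k1 ≥ 1 and σ1 ∈ Σ[x] such that h^{2k1} + σ1 ∈ Ideal(c_eq); (b) there exists δ > 0 such that q − δ ∈ Ideal(c_eq) + QM(c_in). Then there exists k0 ∈ ℕ such that for every real λ with 0 < λ ≤ 1, λq + (1−λ)p ∈ Ideal(c_eq)_{2k0} + QM(c_in)_{2k0}. -/
open MvPolynomial MeasureTheory

lemma IsSOS.add' {n : ℕ} {a b : RPoly n} (ha : IsSOS a) (hb : IsSOS b) : IsSOS (a + b) := by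
  obtain ⟨L, rfl⟩ := ha
  obtain ⟨M, rfl⟩ := hb
  exact ⟨L ++ M, by simp⟩

lemma IsSOS.sq_mul' {n : ℕ} {a : RPoly n} (ha : IsSOS a) (g : RPoly n) : IsSOS (g ^ 2 * a) := by
  obtain ⟨L, rfl⟩ := ha
  refine ⟨L.map (fun q => g * q), ?_⟩
  induction L with
  | nil => simp
  | cons x L ih =>
    simp only [List.map_cons, List.sum_cons, mul_add, mul_pow] at ih ⊢
    rw [ih]

lemma IsSOS.C_mul' {n : ℕ} {a : RPoly n} (ha : IsSOS a) {r : ℝ} (hr : 0 ≤ r) :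
    IsSOS (C r * a) := by
  have := ha.sq_mul' (C (Real.sqrt r))
  rwa [← C_pow, Real.sq_sqrt hr] at this

lemma IsSOS.sq' {n : ℕ} (g : RPoly n) : IsSOS (g ^ 2) := ⟨[g], by simp⟩

lemma univ_sos (m : ℕ) : ∃ a b : ℝ, 0 < a ∧ 0 < b ∧ ∀ (n : ℕ) (h : RPoly n),
    IsSOS (C b + h + C a * h ^ (2 ^ (m + 1))) := by
  induction m with
  | zero =>
    refine ⟨1/2, 1/2, by norm_num, by norm_num, fun n h => ?_⟩
    have := (IsSOS.sq' (1 + h)).C_mul' (r := 1/2) (by norm_num)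
    convert this using 1
    have h2 : (C (1/2 : ℝ) : RPoly n) * 2 = 1 := by
      rw [show (2 : RPoly n) = C 2 from (map_ofNat C 2).symm, ← C_mul]; norm_num
    linear_combination (-h) * h2
  | succ m ih =>
    obtain ⟨a, b, ha, hb, H⟩ := ih
    refine ⟨a / 2, b + a / 2, by positivity, by positivity, fun n h => ?_⟩
    have := (H n h).add' ((IsSOS.sq' (1 - h ^ (2 ^ (m + 1)))).C_mul' (r := a/2) (by positivity))
    convert this using 1
    have h2 : (C (a/2 : ℝ) : RPoly n) * 2 = C a := by
      rw [show (2 : RPoly n) = C 2 from (map_ofNat C 2).symm, ← C_mul]; congr 1; ring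
    rw [pow_succ 2 (m+1), pow_mul, C_add]
    linear_combination (h ^ (2 ^ (m + 1))) * h2

lemma idealFull_exists {n : ℕ} {E : Finset ℕ} {c : ℕ → RPoly n} {p : RPoly n}
    (hp : p ∈ IdealFull E c) : ∃ A : ℕ → RPoly n, p = ∑ j ∈ E, c j * A j := by
  have hp' : p ∈ Submodule.span (RPoly n) (c '' (E : Set ℕ)) := hp
  rw [Submodule.mem_span_image_finset_iff_exists_fun'] at hp'
  obtain ⟨A, hA⟩ := hp'
  exact ⟨A, by rw [← hA]; simp [mul_comm]⟩

lemma deg_C_mul {n : ℕ} (r : ℝ) (g : RPoly n) : (C r * g).totalDegree ≤ g.totalDegree := by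
  rw [← smul_eq_C_mul]; exact totalDegree_smul_le _ _

lemma deg_add {n : ℕ} {a b : RPoly n} {d : ℕ} (ha : a.totalDegree ≤ d) (hb : b.totalDegree ≤ d) :
    (a + b).totalDegree ≤ d := (totalDegree_add _ _).trans (max_le ha hb)

/-- the key algebraic lemma in the proof of Theorem 3.2: a uniform
degree bound `k0` such that `λq + (1-λ)p` lies in the truncated sum
`Ideal(c_eq)_{2k0} + QM(c_in)_{2k0}` for all `0 < λ ≤ 1`. -/
theorem statement_11
    (n : ℕ) (E I : Finset ℕ) (hEI : Disjoint E I) (c : ℕ → RPoly n)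
    (p q σ0 : RPoly n) (hσ0 : σ0 ∈ QModFull I c)
    (h : RPoly n) (hh : h = p - σ0)
    -- (a) h^{2k1} + σ1 ∈ Ideal(c_eq)
    (k1 : ℕ) (hk1 : 1 ≤ k1) (σ1 : RPoly n) (hσ1 : IsSOS σ1)
    (hmem : h ^ (2 * k1) + σ1 ∈ IdealFull E c)
    -- (b) q - δ ∈ Ideal(c_eq) + QM(c_in)
    (δ : ℝ) (hδ : 0 < δ)
    (hq : ∃ p1 ∈ IdealFull E c, ∃ p2 ∈ QModFull I c, q - C δ = p1 + p2) :
    ∃ k0 : ℕ, ∀ lam : ℝ, 0 < lam → lam ≤ 1 →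
      ∃ p1 ∈ IdealDeg E c (2 * k0), ∃ p2 ∈ QModDeg I c (2 * k0),
        C lam * q + C (1 - lam) * p = p1 + p2 := by
  obtain ⟨a, b, ha, hb, H⟩ := univ_sos k1
  obtain ⟨i1, hi1, i2, ⟨s, τ, hs, hτ, rfl⟩, hqe⟩ := hq
  obtain ⟨A, rfl⟩ := idealFull_exists hi1
  obtain ⟨s', τ', hs', hτ', hσ0e⟩ := hσ0
  set M := 2 ^ k1 with hM
  have hkM : k1 < M := Nat.lt_two_pow_self
  have hN : 2 ^ (k1 + 1) = 2 * M := by rw [pow_succ, mul_comm]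
  set g := h ^ (M - k1) with hg
  have hσ2 : IsSOS (g ^ 2 * σ1) := hσ1.sq_mul' g
  have hmem2 : h ^ (2 * M) + g ^ 2 * σ1 ∈ IdealFull E c := by
    have := Ideal.mul_mem_left (Ideal.span (c '' (E : Set ℕ))) (g ^ 2) hmem
    have e : g ^ 2 * (h ^ (2 * k1) + σ1) = h ^ (2 * M) + g ^ 2 * σ1 := by
      rw [mul_add, hg, ← pow_mul, ← pow_add]; congr 2; omega
    rw [e] at this
    exact this
  set σ2 := g ^ 2 * σ1
  obtain ⟨B, hB⟩ := idealFull_exists hmem2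
  let K := (∑ j ∈ E, ((A j).totalDegree + (B j).totalDegree + (c j).totalDegree)) +
    (∑ j ∈ I, ((τ j).totalDegree + (τ' j).totalDegree + (c j).totalDegree)) +
    s.totalDegree + s'.totalDegree + σ2.totalDegree + h.totalDegree + 2 * M * h.totalDegree
  refine ⟨K, fun lam hl hl1 => ?_⟩
  have hl1' : 0 ≤ 1 - lam := by linarith
  have hKE : ∀ j ∈ E, (A j).totalDegree + (B j).totalDegree + (c j).totalDegree ≤ K := by
    intro j hj
    have := Finset.single_le_sum
      (f := fun j => (A j).totalDegree + (B j).totalDegree + (c j).totalDegree)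
      (fun _ _ => Nat.zero_le _) hj
    simp only [K]; omega
  have hKI : ∀ j ∈ I, (τ j).totalDegree + (τ' j).totalDegree + (c j).totalDegree ≤ K := by
    intro j hj
    have := Finset.single_le_sum
      (f := fun j => (τ j).totalDegree + (τ' j).totalDegree + (c j).totalDegree)
      (fun _ _ => Nat.zero_le _) hj
    simp only [K]; omega
  have hK1 : s.totalDegree ≤ 2 * K := by simp only [K]; omega
  have hK2 : s'.totalDegree ≤ 2 * K := by simp only [K]; omega
  have hK3 : σ2.totalDegree ≤ 2 * K := by simp only [K]; omega
  have hK4 : h.totalDegree ≤ 2 * K := by simp only [K]; omega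
  have hK5 : 2 * M * h.totalDegree ≤ 2 * K := by simp only [K]; omega
  clear_value K
  -- parameters
  set u : ℝ := lam * δ / b with hu
  have hu0 : 0 < u := by positivity
  set r : ℝ := (1 - lam) / u with hr
  have hr0 : 0 ≤ r := by positivity
  set w : ℝ := u * (a * r ^ (2 * M)) with hw
  have hw0 : 0 ≤ w := by positivity
  have hub : u * b = lam * δ := by rw [hu]; field_simp
  have hur : u * r = 1 - lam := by rw [hr]; field_simp
  set S : RPoly n := C b + C r * h + C a * (C r * h) ^ (2 ^ (k1 + 1)) with hS
  have hSs : IsSOS S := H n (C r * h)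
  have hSd : S.totalDegree ≤ 2 * K := by
    refine deg_add (deg_add (by simp) ((deg_C_mul _ _).trans hK4)) ((deg_C_mul _ _).trans ?_)
    rw [hN]
    refine (totalDegree_pow _ _).trans (le_trans ?_ hK5)
    exact Nat.mul_le_mul_left _ (deg_C_mul _ _)
  have hSe : C u * S = C (lam * δ) + C (1 - lam) * h + C w * h ^ (2 * M) := by
    rw [hS, hN, ← hub, ← hur, hw]
    simp only [C_mul, C_pow, mul_pow]
    ring
  refine ⟨∑ j ∈ E, c j * (C lam * A j + C (-w) * B j), ⟨_, ?_, rfl⟩,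
    (C lam * s + C (1 - lam) * s' + C u * S + C w * σ2) +
      ∑ j ∈ I, c j * (C lam * τ j + C (1 - lam) * τ' j), ⟨_, _, ?_, ?_, ?_, rfl⟩, ?_⟩
  · intro j hj
    have := hKE j hj
    have h1 : (C lam * A j + C (-w) * B j).totalDegree ≤
        (A j).totalDegree + (B j).totalDegree :=
      deg_add ((deg_C_mul _ _).trans (by omega)) ((deg_C_mul _ _).trans (by omega))
    omega
  · exact (((hs.C_mul' hl.le).add' (hs'.C_mul' hl1')).add' (hSs.C_mul' hu0.le)).add'
      (hσ2.C_mul' hw0)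
  · exact deg_add (deg_add (deg_add ((deg_C_mul _ _).trans hK1) ((deg_C_mul _ _).trans hK2))
      ((deg_C_mul _ _).trans hSd)) ((deg_C_mul _ _).trans hK3)
  · intro j hj
    refine ⟨((hτ j hj).C_mul' hl.le).add' ((hτ' j hj).C_mul' hl1'), ?_⟩
    have := hKI j hj
    have h1 : (C lam * τ j + C (1 - lam) * τ' j).totalDegree ≤
        (τ j).totalDegree + (τ' j).totalDegree :=
      deg_add ((deg_C_mul _ _).trans (by omega)) ((deg_C_mul _ _).trans (by omega))
    omega
  · have e1 : ∑ j ∈ E, c j * (C lam * A j + C (-w) * B j) =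
        C lam * ∑ j ∈ E, c j * A j - C w * ∑ j ∈ E, c j * B j := by
      rw [Finset.mul_sum, Finset.mul_sum, ← Finset.sum_sub_distrib]
      refine Finset.sum_congr rfl fun j _ => ?_
      rw [C_neg]; ring
    have e2 : ∑ j ∈ I, c j * (C lam * τ j + C (1 - lam) * τ' j) =
        C lam * ∑ j ∈ I, c j * τ j + C (1 - lam) * ∑ j ∈ I, c j * τ' j := by
      rw [Finset.mul_sum, Finset.mul_sum, ← Finset.sum_add_distrib]
      refine Finset.sum_congr rfl fun j _ => ?_
      ring
    have e3 : (C (lam * δ) : RPoly n) = C lam * C δ := C_mul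
    rw [e1, e2, ← hB, hSe, e3]
    have hp : p = h + σ0 := by rw [hh]; ring
    rw [hp, hσ0e]
    linear_combination C lam * hqe
end
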